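/- arXiv:2510.22385 — 3 statements merged into one kernel-verified Lean document; each statement's English description precedes it below -/
import Mathlib

section
/- For all n ≥ 0, the tree inversion enumerator equals the parking function cosum enumerator: Σ_{T ∈ Tree(n+1)} q^{inv(T)} = Σ_{π ∈ PF(n)} q^{cosum(π)} as polynomials in q. -/
open Finset Polynomial

/-- `j` lies on the unique path from `i` to the root `0` in the tree `T`. -/
def OnPath {n : ℕ} (T : SimpleGraph (Fin (n+1))) (i j : Fin (n+1)) : Prop :=
  ∀ p : T.Walk i 0, p.IsPath → j ∈ p.support

/-- The number of inversions of a tree on `{0,...,n}` rooted at `0`: pairs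
`(i,j)` with `1 ≤ i < j ≤ n` such that `j` is on the path from `i` to `0`. -/
noncomputable def treeInv {n : ℕ} (T : SimpleGraph (Fin (n+1))) : ℕ :=
  Nat.card {p : Fin (n+1) × Fin (n+1) //
    0 < p.1.val ∧ p.1 < p.2 ∧ OnPath T p.1 p.2}

/-- `IsPF n π` : `π` is a parking function of length `n`, i.e. a sequence of
positive integers whose weakly increasing rearrangement `b₁ ≤ ⋯ ≤ bₙ`
satisfies `b_j ≤ j` for all `1 ≤ j ≤ n`. -/
def IsPF (n : ℕ) (π : Fin n → ℕ) : Prop :=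
  (∀ i, 1 ≤ π i) ∧ ∃ σ : Equiv.Perm (Fin n),
    (Monotone fun j => π (σ j)) ∧ ∀ j : Fin n, π (σ j) ≤ j.val + 1

/-- The cosum of a parking function: `C(n+1,2) - Σ_i π_i`. -/
noncomputable def cosum (n : ℕ) (π : Fin n → ℕ) : ℕ :=
  Nat.choose (n+1) 2 - ∑ i, π i


noncomputable section KrewerasProof

/-- The geometric sum `1 + q + ... + q^k`. -/
def geomQ (k : ℕ) : Polynomial ℤ := ∑ r ∈ Finset.range (k + 1), X ^ r

/-- The common sequence. -/
def krew : ℕ → Polynomial ℤ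
  | 0 => 1
  | n + 1 => ∑ i : Fin (n + 1),
      (n.choose i.val : Polynomial ℤ) * (geomQ i.val * krew i.val * krew (n - i.val))

lemma krew_succ (n : ℕ) : krew (n + 1) = ∑ k ∈ Finset.range (n + 1),
    n.choose k • (geomQ k * krew k * krew (n - k)) := by
  rw [krew, Finset.sum_range]
  simp [nsmul_eq_mul]

lemma eq_krew {α : Type*} [DecidableEq α] (A : Finset α → Polynomial ℤ)
    (h0 : A ∅ = 1)
    (hrec : ∀ (V : Finset α) (v : α), v ∈ V →
      (∀ W : Finset α, W.card < V.card → A W = krew W.card) →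
      A V = ∑ L ∈ (V.erase v).powerset,
        geomQ L.card * krew L.card * krew ((V.erase v).card - L.card)) :
    ∀ V : Finset α, A V = krew V.card := by
  intro V
  induction hn : V.card using Nat.strong_induction_on generalizing V with
  | _ n ih =>
    rcases V.eq_empty_or_nonempty with rfl | ⟨v, hv⟩
    · simp at hn
      subst hn
      rw [h0, krew]
    · rw [hrec V v hv (fun W hW => ih _ (hn ▸ hW) W rfl)]
      have hc : (V.erase v).card = n - 1 := by rw [Finset.card_erase_of_mem hv, hn]
      have hpos : 0 < n := by rw [← hn]; exact Finset.card_pos.2 ⟨v, hv⟩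
      obtain ⟨m, rfl⟩ : ∃ m, n = m + 1 := ⟨n - 1, by omega⟩
      rw [Finset.sum_powerset_apply_card
        (fun k => geomQ k * krew k * krew ((V.erase v).card - k)), hc, krew_succ]
      simp

lemma sum_rank {α : Type*} [LinearOrder α] (S : Finset α) :
    ∑ i ∈ S, (X : Polynomial ℤ) ^ (S.filter (· < i)).card
      = ∑ r ∈ Finset.range S.card, X ^ r := by
  induction S using Finset.induction_on_max with
  | empty => simp
  | insert m S hm ih =>
    have hmS : m ∉ S := fun h => lt_irrefl _ (hm m h)
    rw [Finset.sum_insert hmS, Finset.card_insert_of_notMem hmS, Finset.sum_range_succ, ← ih,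
      add_comm]
    congr 1
    · apply Finset.sum_congr rfl
      intro i hi
      congr 2
      rw [Finset.filter_insert, if_neg (not_lt.2 (hm i hi).le)]
    · congr 1
      rw [Finset.filter_insert, if_neg (lt_irrefl _), Finset.filter_true_of_mem hm]

lemma sum_split {ι κ : Type*} (F : Finset ι) (B : Finset κ) (D : ι → κ → Prop)
    [∀ i, DecidablePred (D i)] [∀ b, DecidablePred fun i => D i b]
    (w : ι → Polynomial ℤ)
    (hex : ∀ i ∈ F, ∃ b ∈ B, D i b)
    (huniq : ∀ i ∈ F, ∀ b ∈ B, ∀ b' ∈ B, D i b → D i b' → b = b') :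
    ∑ i ∈ F, w i = ∑ b ∈ B, ∑ i ∈ F with D i b, w i := by
  simp only [Finset.sum_filter]
  rw [Finset.sum_comm]
  apply Finset.sum_congr rfl
  intro i hi
  obtain ⟨b, hb, hD⟩ := hex i hi
  rw [Finset.sum_eq_single b]
  · simp [hD]
  · intro b' hb' hne
    rw [if_neg]
    intro h
    exact hne (huniq i hi b' hb' b hb h hD)
  · exact fun h => absurd hb h

/-- Forest orders on `V`: strict partial orders in which every up-set is a chain. -/
def IsFO {α : Type*} (R : Finset (α × α)) : Prop :=
  (∀ x, (x, x) ∉ R) ∧ (∀ x y z, (x, y) ∈ R → (y, z) ∈ R → (x, z) ∈ R) ∧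
  (∀ x y z, (x, y) ∈ R → (x, z) ∈ R → y = z ∨ (y, z) ∈ R ∨ (z, y) ∈ R)

open Classical in
def FO {α : Type*} (V : Finset α) : Finset (Finset (α × α)) :=
  (V ×ˢ V).powerset.filter IsFO

lemma mem_FO {α : Type*} (V : Finset α) (R : Finset (α × α)) :
    R ∈ FO V ↔ (∀ x y, (x, y) ∈ R → x ∈ V ∧ y ∈ V) ∧ IsFO R := by
  simp only [FO, Finset.mem_filter, Finset.mem_powerset]
  constructor
  · rintro ⟨h1, h2⟩
    exact ⟨fun x y h => Finset.mem_product.1 (h1 h), h2⟩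
  · rintro ⟨h1, h2⟩
    exact ⟨fun p h => Finset.mem_product.2 (h1 p.1 p.2 h), h2⟩

def invR {α : Type*} [LinearOrder α] (R : Finset (α × α)) : ℕ :=
  (R.filter fun p => p.1 < p.2).card

def sumFO {α : Type*} [LinearOrder α] (V : Finset α) : Polynomial ℤ :=
  ∑ R ∈ FO V, X ^ invR R

/-- `S` is a component of `R` with top `i`. -/
def IsComp {α : Type*} (R : Finset (α × α)) (S : Finset α) (i : α) : Prop :=
  (∀ x ∈ S, x ≠ i → (x, i) ∈ R) ∧ (∀ y, (i, y) ∉ R) ∧ (∀ x y, (x, y) ∈ R → (x ∈ S ↔ y ∈ S))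

lemma exists_top {α : Type*} (R : Finset (α × α)) (hR : IsFO R) (v : α) :
    ∃ i, (i = v ∨ (v, i) ∈ R) ∧ ∀ y, (i, y) ∉ R := by
  classical
  obtain ⟨h1, h2, h3⟩ := hR
  by_contra! hcon
  let U : Finset α := insert v ((R.filter fun p => p.1 = v).image Prod.snd)
  have hU : ∀ i, i ∈ U ↔ (i = v ∨ (v, i) ∈ R) := by
    intro i
    simp [U]
  let d : α → ℕ := fun x => (R.filter fun p => p.1 = x).card
  obtain ⟨m, hm, hmin⟩ := Finset.exists_min_image U d ⟨v, by simp [U]⟩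
  obtain ⟨y, hy⟩ := hcon m ((hU m).1 hm)
  have hyU : y ∈ U := by
    rw [hU]
    rcases (hU m).1 hm with rfl | h
    · exact Or.inr hy
    · exact Or.inr (h2 _ _ _ h hy)
  have hlt : d y < d m := by
    have e1 : ∀ x, d x = ((R.filter fun p => p.1 = x).image Prod.snd).card := by
      intro x
      rw [Finset.card_image_of_injOn]
      intro p hp q hq hpq
      simp at hp hq
      exact Prod.ext (hp.2.trans hq.2.symm) hpq
    rw [e1, e1]
    apply Finset.card_lt_card
    rw [Finset.ssubset_iff_of_subset]
    · refine ⟨y, by simpa using hy, by simpa using h1 y⟩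
    · intro z hz
      simp at hz ⊢
      exact h2 _ _ _ hy hz
  exact absurd (hmin y hyU) (not_le.2 hlt)

lemma sumFO_fiber {α : Type*} [LinearOrder α] (V S : Finset α) (i : α) (hS : S ⊆ V)
    (hi : i ∈ S) [DecidablePred fun R : Finset (α × α) => IsComp R S i] :
    ∑ R ∈ FO V with IsComp R S i, (X : Polynomial ℤ) ^ invR R =
      X ^ (S.filter (· < i)).card * sumFO (S.erase i) * sumFO (V \ S) := by
  classical
  rw [sumFO, sumFO, mul_assoc, Finset.sum_mul_sum, ← Finset.sum_product', Finset.mul_sum]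
  refine Finset.sum_nbij'
    (fun R => (R.filter (fun p => p.1 ∈ S.erase i ∧ p.2 ∈ S.erase i),
      R.filter (fun p => p.1 ∈ V \ S ∧ p.2 ∈ V \ S)))
    (fun Q => Q.1 ∪ Q.2 ∪ (S.erase i) ×ˢ {i}) ?_ ?_ ?_ ?_ ?_
  · intro R hR
    simp only [Finset.mem_filter, mem_FO, Finset.mem_product, IsFO] at hR ⊢
    obtain ⟨⟨hV, h1, h2, h3⟩, -⟩ := hR
    refine ⟨⟨fun x y h => h.2, ?_, ?_, ?_⟩, ⟨fun x y h => h.2, ?_, ?_, ?_⟩⟩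
    · exact fun x h => h1 x h.1
    · exact fun x y z h h' => ⟨h2 x y z h.1 h'.1, h.2.1, h'.2.2⟩
    · intro x y z h h'
      rcases h3 x y z h.1 h'.1 with h4 | h4 | h4
      · exact Or.inl h4
      · exact Or.inr (Or.inl ⟨h4, h.2.2, h'.2.2⟩)
      · exact Or.inr (Or.inr ⟨h4, h'.2.2, h.2.2⟩)
    · exact fun x h => h1 x h.1
    · exact fun x y z h h' => ⟨h2 x y z h.1 h'.1, h.2.1, h'.2.2⟩
    · intro x y z h h'
      rcases h3 x y z h.1 h'.1 with h4 | h4 | h4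
      · exact Or.inl h4
      · exact Or.inr (Or.inl ⟨h4, h.2.2, h'.2.2⟩)
      · exact Or.inr (Or.inr ⟨h4, h'.2.2, h.2.2⟩)
  · rintro ⟨R1, R2⟩ hR
    rw [Finset.mem_filter]
    simp only [mem_FO, Finset.mem_product, IsFO, IsComp, Finset.mem_union,
      Finset.mem_erase, Finset.mem_sdiff, Finset.mem_singleton] at hR ⊢
    obtain ⟨⟨hV1, a1, a2, a3⟩, hV2, b1, b2, b3⟩ := hR
    have hS' : ∀ x ∈ S, x ∈ V := fun x hx => hS hx
    clear hS
    refine ⟨⟨?_, ?_, ?_, ?_⟩, ?_, ?_, ?_⟩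
    · grind
    · grind
    · grind
    · grind
    · grind
    · grind
    · grind
  · intro R hR
    rw [Finset.mem_filter, mem_FO] at hR
    simp only [IsFO, IsComp] at hR
    obtain ⟨⟨hV, h1, h2, h3⟩, c1, c2, c3⟩ := hR
    ext ⟨x, y⟩
    simp only [Finset.mem_filter, Finset.mem_product, Finset.mem_union,
      Finset.mem_erase, Finset.mem_sdiff, Finset.mem_singleton]
    grind
  · rintro ⟨R1, R2⟩ hR
    simp only [mem_FO, Finset.mem_product, IsFO, 
      Finset.mem_erase, Finset.mem_sdiff] at hR
    obtain ⟨⟨hV1, a1, a2, a3⟩, hV2, b1, b2, b3⟩ := hR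
    ext ⟨x, y⟩
    · simp only [Finset.mem_filter, Finset.mem_product, Finset.mem_union,
        Finset.mem_erase, Finset.mem_sdiff, Finset.mem_singleton]
      grind
    · simp only [Finset.mem_filter, Finset.mem_product, Finset.mem_union,
        Finset.mem_erase, Finset.mem_sdiff, Finset.mem_singleton]
      grind
  · intro R hR
    rw [Finset.mem_filter, mem_FO] at hR
    simp only [IsFO, IsComp] at hR
    obtain ⟨⟨hV, h1, h2, h3⟩, c1, c2, c3⟩ := hR
    rw [← pow_add, ← pow_add]
    congr 1
    have e : R.filter (fun p => p.1 < p.2) = ((S.filter (· < i)).image fun x => (x, i)) ∪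
        ((R.filter (fun p => p.1 ∈ S.erase i ∧ p.2 ∈ S.erase i)).filter (fun p => p.1 < p.2) ∪
        (R.filter (fun p => p.1 ∈ V \ S ∧ p.2 ∈ V \ S)).filter (fun p => p.1 < p.2)) := by
      ext ⟨x, y⟩
      simp only [Finset.mem_filter, Finset.mem_image, Prod.mk.injEq, Finset.mem_union,
        Finset.mem_erase, Finset.mem_sdiff]
      grind
    rw [invR, e, Finset.card_union_of_disjoint, Finset.card_union_of_disjoint,
      Finset.card_image_of_injective]
    · rfl
    · intro x y h
      exact (Prod.mk.inj h).1
    · rw [Finset.disjoint_left]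
      rintro ⟨x, y⟩ h h'
      simp at h h'
      grind
    · rw [Finset.disjoint_left]
      rintro ⟨x, y⟩ h h'
      simp at h h'
      grind

lemma sumFO_empty {α : Type*} [LinearOrder α] : sumFO (∅ : Finset α) = 1 := by
  have : FO (∅ : Finset α) = {∅} := by
    ext R
    rw [mem_FO, Finset.mem_singleton]
    constructor
    · rintro ⟨h, -⟩
      ext ⟨x, y⟩
      simpa using fun hh => by simpa using h x y hh
    · rintro rfl
      simp [IsFO]
  simp [sumFO, this, invR]

lemma sumFO_eq {α : Type*} [LinearOrder α] (V : Finset α) : sumFO V = krew V.card := by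
  classical
  refine eq_krew sumFO sumFO_empty ?_ V
  intro V v hv ih
  rw [sumFO, sum_split (FO V)
    ((V.erase v).powerset.sigma fun L => insert v L)
    (fun R b => IsComp R (insert v b.1) b.2)]
  · rw [Finset.sum_sigma]
    apply Finset.sum_congr rfl
    intro L hL
    rw [Finset.mem_powerset] at hL
    have hvL : v ∉ L := fun h => by simpa using hL h
    have hS : insert v L ⊆ V := by
      intro x hx
      rcases Finset.mem_insert.1 hx with rfl | h
      · exact hv
      · exact Finset.mem_of_mem_erase (hL h)
    have hcS : (insert v L).card = L.card + 1 := Finset.card_insert_of_notMem hvL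
    have hle := Finset.card_le_card hS
    have key : ∀ i ∈ insert v L,
        (∑ R ∈ FO V with IsComp R (insert v L) i, (X : Polynomial ℤ) ^ invR R) =
        X ^ ((insert v L).filter (· < i)).card * (krew L.card *
          krew ((V.erase v).card - L.card)) := by
      intro i hi
      rw [sumFO_fiber V _ i hS hi, ih, ih, Finset.card_erase_of_mem hi, mul_assoc,
        Finset.card_sdiff_of_subset hS, hcS, Finset.card_erase_of_mem hv]
      · congr 3
        omega
      · rw [Finset.card_sdiff_of_subset hS]; omega
      · rw [Finset.card_erase_of_mem hi]; omega
    rw [Finset.sum_congr rfl key, ← Finset.sum_mul, sum_rank, hcS, geomQ, mul_assoc]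
  · intro R hR
    rw [mem_FO] at hR
    obtain ⟨hV, hR⟩ := hR
    obtain ⟨i, hi, htop⟩ := exists_top R hR v
    obtain ⟨h1, h2, h3⟩ := hR
    have hS : insert v ((V.filter fun x => x = i ∨ (x, i) ∈ R).erase v) =
        V.filter fun x => x = i ∨ (x, i) ∈ R := by
      apply Finset.insert_erase
      simp only [Finset.mem_filter]
      grind
    refine ⟨⟨(V.filter fun x => x = i ∨ (x, i) ∈ R).erase v, i⟩, ?_, ?_⟩
    · rw [Finset.mem_sigma]
      simp only [hS]
      refine ⟨?_, ?_⟩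
      · rw [Finset.mem_powerset]
        exact Finset.erase_subset_erase _ (Finset.filter_subset _ _)
      · simp only [Finset.mem_filter]
        grind
    · simp only [hS]
      refine ⟨?_, htop, ?_⟩
      · intro x hx hne
        simp only [Finset.mem_filter] at hx
        exact hx.2.resolve_left hne
      · intro x y hxy
        simp only [Finset.mem_filter]
        grind
  · rintro R hR ⟨L, i⟩ hb ⟨L', i'⟩ hb' ⟨c1, c2, c3⟩ ⟨d1, d2, d3⟩
    simp only [Finset.mem_sigma, Finset.mem_powerset] at hb hb' c1 c2 c3 d1 d2 d3
    rw [mem_FO] at hR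
    obtain ⟨hV, h1, h2, h3⟩ := hR
    have hii : i = i' := by
      have hv1 := c1 v (Finset.mem_insert_self _ _)
      have hv2 := d1 v (Finset.mem_insert_self _ _)
      grind
    subst hii
    have : L = L' := by
      have e1 : ∀ x, x ∈ insert v L ↔ x ∈ insert v L' := by grind
      have v1 : v ∉ L := fun h => by simpa using hb.1 h
      have v2 : v ∉ L' := fun h => by simpa using hb'.1 h
      ext x
      have := e1 x
      simp only [Finset.mem_insert] at this
      grind
    subst this
    rfl

def PFs {α : Type*} [Fintype α] [DecidableEq α] (V : Finset α) : Finset (α → ℕ) :=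
  (Fintype.piFinset fun i => if i ∈ V then Finset.Icc 1 V.card else {0}).filter
    fun f => ∀ k ≤ V.card, k ≤ (V.filter fun i => f i ≤ k).card

lemma mem_PFs {α : Type*} [Fintype α] [DecidableEq α] (V : Finset α) (f : α → ℕ) :
    f ∈ PFs V ↔ (∀ i ∉ V, f i = 0) ∧ (∀ i ∈ V, 1 ≤ f i) ∧
      ∀ k ≤ V.card, k ≤ (V.filter fun i => f i ≤ k).card := by
  simp only [PFs, Finset.mem_filter, Fintype.mem_piFinset]
  constructor
  · rintro ⟨h1, h2⟩
    refine ⟨?_, ?_, h2⟩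
    · intro i hi
      simpa [hi] using h1 i
    · intro i hi
      have := h1 i
      simp only [hi, if_true, Finset.mem_Icc] at this
      exact this.1
  · rintro ⟨h0, h1, h2⟩
    refine ⟨?_, h2⟩
    intro i
    by_cases hi : i ∈ V
    · simp only [hi, if_true, Finset.mem_Icc]
      refine ⟨h1 i hi, ?_⟩
      have := Finset.eq_of_subset_of_card_le (Finset.filter_subset _ V) (h2 _ le_rfl)
      rw [← this] at hi
      exact (Finset.mem_filter.1 hi).2
    · simp [hi, h0 i hi]

lemma sum_le_choose {α : Type*} [DecidableEq α] (V : Finset α) (f : α → ℕ)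
    (h : ∀ k ≤ V.card, k ≤ (V.filter fun i => f i ≤ k).card) :
    ∑ i ∈ V, f i ≤ (V.card + 1).choose 2 := by
  have hle : ∀ i ∈ V, f i ≤ V.card := by
    intro i hi
    have := Finset.eq_of_subset_of_card_le (Finset.filter_subset _ V) (h _ le_rfl)
    rw [← this] at hi
    exact (Finset.mem_filter.1 hi).2
  have e : ∀ i ∈ V, f i = ∑ k ∈ Finset.range V.card, if k < f i then 1 else 0 := by
    intro i hi
    rw [← Finset.card_filter]
    have : (Finset.range V.card).filter (fun k => k < f i) = Finset.range (f i) := by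
      ext k
      have := hle i hi
      simp only [Finset.mem_filter, Finset.mem_range]
      omega
    rw [this, Finset.card_range]
  rw [Finset.sum_congr rfl e, Finset.sum_comm]
  have e2 : ∀ k ∈ Finset.range V.card, (∑ i ∈ V, if k < f i then 1 else 0) ≤ V.card - k := by
    intro k hk
    rw [← Finset.card_filter]
    have h1 := h k (Finset.mem_range.1 hk).le
    have h2 := Finset.card_filter_add_card_filter_not (s := V) (fun i => f i ≤ k)
    simp only [not_le] at h2
    omega
  refine (Finset.sum_le_sum e2).trans ?_
  have e3 : ∀ m : ℕ, ∑ k ∈ Finset.range m, (m - k) = (m + 1).choose 2 := by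
    intro m
    induction m with
    | zero => simp
    | succ m ih =>
      rw [Finset.sum_range_succ', Nat.choose_succ_succ' (m + 1) 1, Nat.choose_one_right, ← ih]
      simp [add_comm]
  exact (e3 _).le

lemma choose_split (l m : ℕ) : (l + m + 2).choose 2 =
    (l + 1).choose 2 + (m + 1).choose 2 + (l + 1) * (m + 1) := by
  have hs : ∀ n : ℕ, (n + 1).choose 2 = n + n.choose 2 := by
    intro n
    rw [Nat.choose_succ_succ' n 1, Nat.choose_one_right]
  induction m with
  | zero => rw [hs (l + 1)]; simp; ring
  | succ m ih =>
    have e1 := hs (l + m + 2)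
    have e2 := hs (m + 1)
    have : l + (m + 1) + 2 = l + m + 2 + 1 := by ring
    rw [this, e1, ih, e2]
    ring

def wt {α : Type*} (V : Finset α) (f : α → ℕ) : ℕ := (V.card + 1).choose 2 - ∑ i ∈ V, f i

def sumPF {α : Type*} [Fintype α] [DecidableEq α] (V : Finset α) : Polynomial ℤ :=
  ∑ f ∈ PFs V, X ^ wt V f

/-- `L` is the set of cars parked to the left of the last car `v`. -/
def IsLeft {α : Type*} [DecidableEq α] (U L : Finset α) (f : α → ℕ) : Prop :=
  (∀ k ≤ L.card, k ≤ (L.filter fun i => f i ≤ k).card) ∧ ∀ i ∈ U \ L, L.card + 1 < f i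

lemma isLeft_le {α : Type*} [DecidableEq α] {U L : Finset α} {f : α → ℕ} (h : IsLeft U L f) :
    ∀ i ∈ L, f i ≤ L.card := by
  intro i hi
  have := Finset.eq_of_subset_of_card_le (Finset.filter_subset _ L) (h.1 _ le_rfl)
  rw [← this] at hi
  exact (Finset.mem_filter.1 hi).2

lemma isLeft_unique {α : Type*} [DecidableEq α] {U L L' : Finset α} {f : α → ℕ}
    (hL : L ⊆ U) (hL' : L' ⊆ U) (h : IsLeft U L f) (h' : IsLeft U L' f) : L = L' := by
  have key : ∀ {L : Finset α}, L ⊆ U → IsLeft U L f →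
      L = U.filter fun i => f i ≤ L.card + 1 := by
    intro L hL h
    ext i
    rw [Finset.mem_filter]
    constructor
    · intro hi
      exact ⟨hL hi, (isLeft_le h i hi).trans (Nat.le_succ _)⟩
    · rintro ⟨hi, hle⟩
      by_contra hn
      exact absurd (h.2 i (Finset.mem_sdiff.2 ⟨hi, hn⟩)) (not_lt.2 hle)
  have key2 : ∀ {L L' : Finset α}, L ⊆ U → L' ⊆ U → IsLeft U L f → IsLeft U L' f →
      ¬ L.card < L'.card := by
    intro L L' hL hL' h h' hlt
    have h1 := h'.1 (L.card + 1) hlt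
    have h2 : (L'.filter fun i => f i ≤ L.card + 1).card ≤ L.card := by
      conv_rhs => rw [key hL h]
      exact Finset.card_le_card (Finset.filter_subset_filter _ hL')
    omega
  have hc : L.card = L'.card := by
    have a := key2 hL hL' h h'
    have b := key2 hL' hL h' h
    omega
  rw [key hL h, key hL' h', hc]

lemma isLeft_exists {α : Type*} [DecidableEq α] {V : Finset α} {v : α} (hv : v ∈ V) {f : α → ℕ} :
    ∃ L ⊆ V.erase v, IsLeft (V.erase v) L f := by
  have hex : ∃ j, ((V.erase v).filter fun i => f i ≤ j).card < j := by
    refine ⟨V.card, lt_of_le_of_lt (Finset.card_le_card (Finset.filter_subset _ _)) ?_⟩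
    exact Finset.card_erase_lt_of_mem hv
  have he := Nat.find_spec hex
  have hmin : ∀ j < Nat.find hex, j ≤ ((V.erase v).filter fun i => f i ≤ j).card :=
    fun j hj => not_lt.1 (Nat.find_min hex hj)
  generalize Nat.find hex = e at he hmin
  have hpos : 0 < e := by omega
  have hcard : ((V.erase v).filter fun i => f i ≤ e).card + 1 = e := by
    have h1 := hmin (e - 1) (by omega)
    have h2 : ((V.erase v).filter fun i => f i ≤ e - 1).card ≤
        ((V.erase v).filter fun i => f i ≤ e).card := by
      apply Finset.card_le_card
      intro i hi
      rw [Finset.mem_filter] at hi ⊢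
      exact ⟨hi.1, by omega⟩
    omega
  refine ⟨(V.erase v).filter fun i => f i ≤ e, Finset.filter_subset _ _, ?_, ?_⟩
  · intro k hk
    refine (hmin k (by omega)).trans (Finset.card_le_card ?_)
    intro i hi
    rw [Finset.mem_filter] at hi
    rw [Finset.mem_filter, Finset.mem_filter]
    exact ⟨⟨hi.1, by omega⟩, hi.2⟩
  · intro i hi
    rw [hcard]
    rw [Finset.mem_sdiff, Finset.mem_filter] at hi
    by_contra hcon
    exact hi.2 ⟨hi.1, by omega⟩

lemma card_filter_split {α : Type*} [DecidableEq α] {V L : Finset α} {v : α} (hv : v ∈ V)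
    (hL : L ⊆ V.erase v) (P : α → Prop) [DecidablePred P] :
    (V.filter P).card = (L.filter P).card + (((V.erase v) \ L).filter P).card +
      if P v then 1 else 0 := by
  simp only [Finset.card_filter]
  rw [← Finset.add_sum_erase V _ hv, ← Finset.sum_sdiff hL]
  ring

lemma sumPF_fiber {α : Type*} [Fintype α] [DecidableEq α] (V L : Finset α) (v : α)
    (hv : v ∈ V) (hL : L ⊆ V.erase v)
    [DecidablePred fun f : α → ℕ => IsLeft (V.erase v) L f] :
    ∑ f ∈ PFs V with IsLeft (V.erase v) L f, (X : Polynomial ℤ) ^ wt V f =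
      geomQ L.card * sumPF L * sumPF ((V.erase v) \ L) := by
  classical
  have hsplit := fun (f : α → ℕ) (k : ℕ) => card_filter_split hv hL (fun i => f i ≤ k)
  have hvL : v ∉ L := fun h => by simpa using hL h
  have hcR : ((V.erase v) \ L).card + L.card + 1 = V.card := by
    rw [Finset.card_sdiff_of_subset hL]
    have := Finset.card_le_card hL
    have h2 := Finset.card_erase_add_one hv
    omega
  rw [geomQ, sumPF, sumPF, mul_assoc, Finset.sum_mul_sum (PFs L), ← Finset.sum_product',
    Finset.sum_mul_sum, ← Finset.sum_product']
  have hVR : ∀ i, i ∈ V ↔ i ∈ L ∨ i = v ∨ i ∈ (V.erase v) \ L := by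
    intro i
    have := @hL i
    simp only [Finset.mem_sdiff, Finset.mem_erase] at this ⊢
    by_cases h : i = v
    · subst h; simp [hv]
    · tauto
  have hvR : v ∉ (V.erase v) \ L := by simp
  have hLR : ∀ i ∈ L, i ∉ (V.erase v) \ L := by
    intro i hi; simp [hi]
  have hsum : ∀ f : α → ℕ, ∑ i ∈ V, f i =
      f v + (∑ i ∈ (V.erase v) \ L, f i + ∑ i ∈ L, f i) := by
    intro f
    rw [← Finset.add_sum_erase V _ hv, ← Finset.sum_sdiff hL]
  have hleft : ∀ f : α → ℕ, IsLeft (V.erase v) L f ↔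
      (∀ k ≤ L.card, k ≤ (L.filter fun i => f i ≤ k).card) ∧
        ∀ i ∈ (V.erase v) \ L, L.card + 1 < f i := fun f => Iff.rfl
  generalize (V.erase v) \ L = R at *
  refine Finset.sum_nbij'
    (fun f => (L.card + 1 - f v, ((fun i => if i ∈ L then f i else 0),
      (fun i => if i ∈ R then f i - (L.card + 1) else 0))))
    (fun q i => if i ∈ L then q.2.1 i else if i = v then L.card + 1 - q.1 else
      if i ∈ R then q.2.2 i + (L.card + 1) else 0) ?_ ?_ ?_ ?_ ?_
  · intro f hf
    rw [Finset.mem_filter, mem_PFs] at hf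
    obtain ⟨⟨h0, h1, h2⟩, h3⟩ := hf
    have hle := isLeft_le h3
    rw [hleft] at h3
    obtain ⟨h3, h4⟩ := h3
    simp only [Finset.mem_product, mem_PFs, Finset.mem_range]
    have hv1 := h1 v hv
    refine ⟨by omega, ⟨?_, ?_, ?_⟩, ?_, ?_, ?_⟩
    · intro i hi; simp [hi]
    · intro i hi; simpa [hi] using h1 i ((hVR i).2 (Or.inl hi))
    · intro k hk
      refine (h3 k hk).trans (Finset.card_le_card ?_)
      intro i hi
      rw [Finset.mem_filter] at hi ⊢
      simpa [hi.1] using hi.2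
    · intro i hi; simp [hi]
    · intro i hi
      have := h4 i hi
      simp only [hi, if_true]
      omega
    · intro k hk
      have e1 := h2 (k + (L.card + 1)) (by omega)
      rw [hsplit] at e1
      have e2 : (L.filter fun i => f i ≤ k + (L.card + 1)).card ≤ L.card :=
        Finset.card_le_card (Finset.filter_subset _ _)
      have e3 : (R.filter fun i => f i ≤ k + (L.card + 1)).card ≤
          (R.filter fun i => (if i ∈ R then f i - (L.card + 1) else 0) ≤ k).card := by
        apply Finset.card_le_card
        intro i hi
        rw [Finset.mem_filter] at hi ⊢
        refine ⟨hi.1, ?_⟩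
        simp only [hi.1, if_true]
        omega
      split_ifs at e1 <;> omega
  · rintro ⟨r, f1, f2⟩ hq
    simp only [Finset.mem_product, mem_PFs, Finset.mem_range] at hq
    obtain ⟨hr, ⟨a0, a1, a2⟩, b0, b1, b2⟩ := hq
    have gL : ∀ i ∈ L, (if i ∈ L then f1 i else if i = v then L.card + 1 - r else
      if i ∈ R then f2 i + (L.card + 1) else 0) = f1 i := by
      intro i hi; simp [hi]
    have gv : (if v ∈ L then f1 v else if v = v then L.card + 1 - r else
      if v ∈ R then f2 v + (L.card + 1) else 0) = L.card + 1 - r := by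
      simp [hvL]
    have gR : ∀ i ∈ R, (if i ∈ L then f1 i else if i = v then L.card + 1 - r else
      if i ∈ R then f2 i + (L.card + 1) else 0) = f2 i + (L.card + 1) := by
      intro i hi
      have n1 : i ∉ L := fun h => hLR i h hi
      have n2 : i ≠ v := fun h => hvR (h ▸ hi)
      simp [n1, n2, hi]
    have g0 : ∀ i ∉ V, (if i ∈ L then f1 i else if i = v then L.card + 1 - r else
      if i ∈ R then f2 i + (L.card + 1) else 0) = 0 := by
      intro i hi
      rw [hVR] at hi
      push Not at hi
      simp [hi.1, hi.2.1, hi.2.2]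
    obtain ⟨f, hf⟩ : ∃ f : α → ℕ, f = (fun i => if i ∈ L then f1 i else if i = v then L.card + 1 - r else
      if i ∈ R then f2 i + (L.card + 1) else 0) := ⟨_, rfl⟩
    have gL' : ∀ i ∈ L, f i = f1 i := by rw [hf]; exact gL
    have gR' : ∀ i ∈ R, f i = f2 i + (L.card + 1) := by rw [hf]; exact gR
    have gv' : f v = L.card + 1 - r := by rw [hf]; exact gv
    have g0' : ∀ i ∉ V, f i = 0 := by rw [hf]; exact g0
    change (fun i => if i ∈ L then f1 i else if i = v then L.card + 1 - r else
      if i ∈ R then f2 i + (L.card + 1) else 0) ∈ _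
    rw [← hf]
    clear gL gR gv g0 hf
    rw [Finset.mem_filter, mem_PFs, hleft]
    have cL : ∀ k, (L.filter fun i => f i ≤ k).card = (L.filter fun i => f1 i ≤ k).card := by
      intro k
      congr 1
      apply Finset.filter_congr
      intro i hi
      rw [gL' i hi]
    refine ⟨⟨g0', ?_, ?_⟩, ?_, ?_⟩
    · intro i hi
      rcases (hVR i).1 hi with h | h | h
      · rw [gL' i h]; exact a1 i h
      · rw [h, gv']; omega
      · rw [gR' i h]; omega
    · intro k hk
      rw [hsplit, cL]
      by_cases hkL : k ≤ L.card
      · have := a2 k hkL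
        omega
      · have e1 := a2 L.card le_rfl
        have e2 : (L.filter fun i => f1 i ≤ L.card).card ≤ (L.filter fun i => f1 i ≤ k).card := by
          apply Finset.card_le_card
          intro i hi
          rw [Finset.mem_filter] at hi ⊢
          exact ⟨hi.1, by omega⟩
        have e3 := b2 (k - (L.card + 1)) (by omega)
        have e4 : (R.filter fun i => f2 i ≤ k - (L.card + 1)).card ≤
            (R.filter fun i => f i ≤ k).card := by
          apply Finset.card_le_card
          intro i hi
          rw [Finset.mem_filter] at hi ⊢
          refine ⟨hi.1, ?_⟩
          rw [gR' i hi.1]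
          omega
        rw [if_pos (by omega)]
        omega
    · intro k hk
      rw [cL]
      exact a2 k hk
    · intro i hi
      rw [gR' i hi]
      have := b1 i hi
      omega
  · intro f hf
    rw [Finset.mem_filter, mem_PFs] at hf
    obtain ⟨⟨h0, h1, h2⟩, h3⟩ := hf
    rw [hleft] at h3
    obtain ⟨h3, h4⟩ := h3
    have hfv : f v ≤ L.card + 1 := by
      by_contra hcon
      have e1 := h2 (L.card + 1) (by omega)
      rw [hsplit, if_neg hcon] at e1
      have e2 : (L.filter fun i => f i ≤ L.card + 1).card ≤ L.card :=
        Finset.card_le_card (Finset.filter_subset _ _)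
      have e3 : R.filter (fun i => f i ≤ L.card + 1) = ∅ := by
        apply Finset.filter_false_of_mem
        intro i hi
        have := h4 i hi
        omega
      rw [e3, Finset.card_empty] at e1
      omega
    funext i
    simp only
    by_cases iL : i ∈ L
    · simp [iL]
    · by_cases iv : i = v
      · subst iv
        simp [iL]
        omega
      · by_cases iR : i ∈ R
        · have := h4 i iR
          simp [iL, iv, iR]
          omega
        · simp only [iL, iv, iR, if_false]
          refine (h0 i ?_).symm
          rw [hVR]
          tauto
  · rintro ⟨r, f1, f2⟩ hq
    simp only [Finset.mem_product, mem_PFs, Finset.mem_range] at hq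
    obtain ⟨hr, ⟨a0, a1, a2⟩, b0, b1, b2⟩ := hq
    refine Prod.ext ?_ (Prod.ext ?_ ?_)
    · simp [hvL]
      omega
    · funext i
      by_cases iL : i ∈ L
      · simp [iL]
      · simp [iL, a0 i iL]
    · funext i
      by_cases iR : i ∈ R
      · have n1 : i ∉ L := fun h => hLR i h iR
        have n2 : i ≠ v := fun h => hvR (h ▸ iR)
        simp [iR, n1, n2]
      · simp [iR, b0 i iR]
  · intro f hf
    rw [Finset.mem_filter, mem_PFs] at hf
    obtain ⟨⟨h0, h1, h2⟩, h3⟩ := hf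
    rw [hleft] at h3
    obtain ⟨h3, h4⟩ := h3
    have hfv : f v ≤ L.card + 1 := by
      by_contra hcon
      have e1 := h2 (L.card + 1) (by omega)
      rw [hsplit, if_neg hcon] at e1
      have e2 : (L.filter fun i => f i ≤ L.card + 1).card ≤ L.card :=
        Finset.card_le_card (Finset.filter_subset _ _)
      have e3 : R.filter (fun i => f i ≤ L.card + 1) = ∅ := by
        apply Finset.filter_false_of_mem
        intro i hi
        have := h4 i hi
        omega
      rw [e3, Finset.card_empty] at e1
      omega
    rw [← pow_add, ← pow_add]
    congr 1
    have s1 : ∑ i ∈ L, (if i ∈ L then f i else 0) = ∑ i ∈ L, f i :=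
      Finset.sum_congr rfl fun i hi => by simp [hi]
    have s2 : ∑ i ∈ R, (if i ∈ R then f i - (L.card + 1) else 0) + R.card * (L.card + 1)
        = ∑ i ∈ R, f i := by
      rw [← smul_eq_mul, ← Finset.sum_const, ← Finset.sum_add_distrib]
      refine Finset.sum_congr rfl fun i hi => ?_
      have := h4 i hi
      simp only [hi, if_true]
      omega
    have t1 := sum_le_choose L f h3
    have t2 := sum_le_choose R (fun i => if i ∈ R then f i - (L.card + 1) else 0) (by
      intro k hk
      have e1 := h2 (k + (L.card + 1)) (by omega)
      rw [hsplit] at e1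
      have e2 : (L.filter fun i => f i ≤ k + (L.card + 1)).card ≤ L.card :=
        Finset.card_le_card (Finset.filter_subset _ _)
      have e3 : (R.filter fun i => f i ≤ k + (L.card + 1)).card ≤
          (R.filter fun i => (if i ∈ R then f i - (L.card + 1) else 0) ≤ k).card := by
        apply Finset.card_le_card
        intro i hi
        rw [Finset.mem_filter] at hi ⊢
        refine ⟨hi.1, ?_⟩
        simp only [hi.1, if_true]
        omega
      split_ifs at e1 <;> omega)
    have t3 := choose_split L.card R.card
    have hVc : V.card + 1 = L.card + R.card + 2 := by omega
    simp only [wt]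
    rw [hsum, hVc, t3, s1, ← s2]
    generalize ∑ i ∈ R, (if i ∈ R then f i - (L.card + 1) else 0) = y at *
    generalize ∑ i ∈ L, f i = x at *
    have t4 : (L.card + 1) * (R.card + 1) = R.card * (L.card + 1) + (L.card + 1) := by ring
    rw [t4]
    generalize R.card * (L.card + 1) = z at *
    omega

lemma sumPF_empty {α : Type*} [Fintype α] [DecidableEq α] : sumPF (∅ : Finset α) = 1 := by
  have : PFs (∅ : Finset α) = {fun _ => 0} := by
    ext f
    rw [mem_PFs, Finset.mem_singleton]
    constructor
    · rintro ⟨h, -⟩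
      funext i
      exact h i (by simp)
    · rintro rfl
      simp
  simp [sumPF, this, wt]

lemma sumPF_eq {α : Type*} [Fintype α] [DecidableEq α] (V : Finset α) :
    sumPF V = krew V.card := by
  classical
  refine eq_krew sumPF sumPF_empty ?_ V
  intro V v hv ih
  rw [sumPF, sum_split (PFs V) (V.erase v).powerset (fun f L => IsLeft (V.erase v) L f)]
  · apply Finset.sum_congr rfl
    intro L hL
    rw [Finset.mem_powerset] at hL
    have h1 := Finset.card_le_card hL
    have h2 := Finset.card_erase_add_one hv
    rw [sumPF_fiber V L v hv hL, ih L (by omega), ih, Finset.card_sdiff_of_subset hL]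
    rw [Finset.card_sdiff_of_subset hL]
    omega
  · intro f hf
    obtain ⟨L, hL, h⟩ := isLeft_exists hv (f := f)
    exact ⟨L, Finset.mem_powerset.2 hL, h⟩
  · intro f hf L hL L' hL' h h'
    exact isLeft_unique (Finset.mem_powerset.1 hL) (Finset.mem_powerset.1 hL') h h'

lemma isPF_iff (n : ℕ) (π : Fin n → ℕ) : IsPF n π ↔ π ∈ PFs (Finset.univ : Finset (Fin n)) := by
  rw [mem_PFs]
  simp only [Finset.mem_univ, not_true_eq_false, false_imp_iff, implies_true, true_and,
    Finset.card_univ, Fintype.card_fin, forall_const, IsPF]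
  refine and_congr_right fun _ => ?_
  constructor
  · rintro ⟨σ, -, hσ⟩ k hk
    have hsub : ((Finset.univ : Finset (Fin n)).filter fun j => j.val < k).image σ ⊆
        Finset.univ.filter fun i => π i ≤ k := by
      intro i hi
      simp only [Finset.mem_image, Finset.mem_filter, Finset.mem_univ, true_and] at hi ⊢
      obtain ⟨j, hj, rfl⟩ := hi
      have := hσ j
      omega
    have h1 := Finset.card_le_card hsub
    rw [Finset.card_image_of_injective _ σ.injective, Fin.card_filter_val_lt] at h1
    omega
  · intro h
    refine ⟨Tuple.sort π, Tuple.monotone_sort π, ?_⟩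
    intro j
    by_contra hcon
    push Not at hcon
    have h1 := h (j.val + 1) j.isLt
    have hsub : (Finset.univ.filter fun i => π i ≤ j.val + 1) ⊆
        ((Finset.univ : Finset (Fin n)).filter fun i => i.val < j.val).image (Tuple.sort π) := by
      intro i hi
      simp only [Finset.mem_image, Finset.mem_filter, Finset.mem_univ, true_and] at hi ⊢
      refine ⟨(Tuple.sort π).symm i, ?_, by simp⟩
      by_contra hlt
      have hle : j ≤ (Tuple.sort π).symm i := by
        rw [Fin.le_def]; omega
      have := Tuple.monotone_sort π hle
      simp only [Function.comp_apply, Equiv.apply_symm_apply] at this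
      omega
    have h2 := Finset.card_le_card hsub
    rw [Finset.card_image_of_injective _ (Tuple.sort π).injective, Fin.card_filter_val_lt] at h2
    omega

lemma pf_side (n : ℕ) :
    ∑ᶠ π ∈ {π : Fin n → ℕ | IsPF n π}, (X : Polynomial ℤ) ^ cosum n π = krew n := by
  have hs : {π : Fin n → ℕ | IsPF n π} = ↑(PFs (Finset.univ : Finset (Fin n))) := by
    ext π
    simp [isPF_iff]
  rw [hs, finsum_mem_coe_finset]
  have := sumPF_eq (Finset.univ : Finset (Fin n))
  rw [Finset.card_univ, Fintype.card_fin] at this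
  rw [← this, sumPF]
  simp [wt, cosum]

section Trees

variable {n : ℕ} {T : SimpleGraph (Fin (n + 1))}

lemma onPath_iff (hT : T.IsTree) {i j : Fin (n + 1)} {p : T.Walk i 0} (hp : p.IsPath) :
    OnPath T i j ↔ j ∈ p.support := by
  constructor
  · intro h
    exact h p hp
  · intro h q hq
    rwa [(hT.existsUnique_path i 0).unique hq hp]

lemma exists_path (hT : T.IsTree) (i : Fin (n + 1)) : ∃ p : T.Walk i 0, p.IsPath :=
  (hT.existsUnique_path i 0).exists

lemma onPath_refl (i : Fin (n + 1)) : OnPath T i i := fun p _ => p.start_mem_support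

lemma onPath_zero (i : Fin (n + 1)) : OnPath T i 0 := fun p _ => p.end_mem_support

lemma onPath_trans (hT : T.IsTree) {i j k : Fin (n + 1)} (h : OnPath T i j) (h' : OnPath T j k) :
    OnPath T i k := by
  obtain ⟨p, hp⟩ := exists_path hT i
  have hj := h p hp
  rw [onPath_iff hT hp]
  exact p.support_dropUntil_subset_support hj (h' _ (hp.dropUntil hj))

lemma onPath_antisymm (hT : T.IsTree) {i j : Fin (n + 1)} (h : OnPath T i j) (h' : OnPath T j i) :
    i = j := by
  by_contra hne
  obtain ⟨p, hp⟩ := exists_path hT i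
  have hj := h p hp
  have hq := hp.dropUntil hj
  have hi := h' _ hq
  have e1 := SimpleGraph.Walk.length_dropUntil_lt_length hj (Ne.symm hne)
  have e2 := SimpleGraph.Walk.length_dropUntil_lt_length hi hne
  rw [(hT.existsUnique_path i 0).unique (hq.dropUntil hi) hp] at e2
  omega

lemma onPath_chain (hT : T.IsTree) {i j k : Fin (n + 1)} (h : OnPath T i j) (h' : OnPath T i k) :
    OnPath T j k ∨ OnPath T k j := by
  obtain ⟨p, hp⟩ := exists_path hT i
  rw [onPath_iff hT hp] at h h'
  have key : ∀ (i z : Fin (n + 1)) (p : T.Walk i z), z = 0 → p.IsPath → j ∈ p.support →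
      k ∈ p.support → OnPath T j k ∨ OnPath T k j := by
    intro i z p
    induction p with
    | nil =>
      intro hz _ h h'
      simp at h h'
      subst h h'
      exact Or.inl (onPath_refl _)
    | cons hadj q ih =>
      intro hz hp h h'
      subst hz
      have hq := hp.of_cons
      rw [SimpleGraph.Walk.support_cons, List.mem_cons] at h h'
      rcases h with rfl | h
      · left
        rw [onPath_iff hT hp, SimpleGraph.Walk.support_cons, List.mem_cons]
        exact h'
      · rcases h' with rfl | h'
        · right
          rw [onPath_iff hT hp, SimpleGraph.Walk.support_cons, List.mem_cons]
          exact Or.inr h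
        · exact ih rfl hq h h'
  exact key i _ p rfl hp h h'

/-- `j` covers `i` in the tree order. -/
def TCov (T : SimpleGraph (Fin (n + 1))) (i j : Fin (n + 1)) : Prop :=
  i ≠ j ∧ OnPath T i j ∧ ∀ k, OnPath T i k → OnPath T k j → k = i ∨ k = j

lemma tcov_of_adj (hT : T.IsTree) {i j : Fin (n + 1)} (h : T.Adj i j) {p : T.Walk j 0}
    (hp : p.IsPath) (hi : i ∉ p.support) : TCov T i j := by
  have hc : (SimpleGraph.Walk.cons h p).IsPath := by
    rw [SimpleGraph.Walk.cons_isPath_iff]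
    exact ⟨hp, hi⟩
  refine ⟨h.ne, ?_, ?_⟩
  · rw [onPath_iff hT hc]
    simp
  · intro k hk hkj
    rw [onPath_iff hT hc, SimpleGraph.Walk.support_cons, List.mem_cons] at hk
    rcases hk with hk | hk
    · exact Or.inl hk
    · right
      rw [← onPath_iff hT hp] at hk
      exact onPath_antisymm hT hkj hk

lemma adj_iff_tcov (hT : T.IsTree) (i j : Fin (n + 1)) :
    T.Adj i j ↔ TCov T i j ∨ TCov T j i := by
  constructor
  · intro h
    obtain ⟨p, hp⟩ := exists_path hT j
    by_cases hi : i ∈ p.support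
    · right
      obtain ⟨q, hq⟩ := exists_path hT i
      refine tcov_of_adj hT h.symm hq ?_
      intro hj
      rw [← onPath_iff hT hp] at hi
      rw [← onPath_iff hT hq] at hj
      exact h.ne (onPath_antisymm hT hj hi)
    · left
      exact tcov_of_adj hT h hp hi
  · have key : ∀ i j, TCov T i j → T.Adj i j := by
      rintro i j ⟨hne, hij, hcov⟩
      obtain ⟨p, hp⟩ := exists_path hT i
      cases p with
      | nil =>
        rw [onPath_iff hT hp] at hij
        simp at hij
        exact absurd hij.symm hne
      | cons hadj q =>
        rename_i x
        have hq := hp.of_cons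
        have hx : OnPath T i x := by
          rw [onPath_iff hT hp]; simp
        have hxj : OnPath T x j := by
          rw [onPath_iff hT hp, SimpleGraph.Walk.support_cons, List.mem_cons] at hij
          rw [onPath_iff hT hq]
          exact hij.resolve_left (Ne.symm hne)
        rcases hcov x hx hxj with h | h
        · exact absurd h hadj.ne'
        · exact h ▸ hadj
    rintro (h | h)
    · exact key _ _ h
    · exact (key _ _ h).symm

open Classical in
def treeFO (T : SimpleGraph (Fin (n + 1))) : Finset (Fin (n + 1) × Fin (n + 1)) :=
  Finset.univ.filter fun p => p.1 ≠ 0 ∧ p.2 ≠ 0 ∧ p.1 ≠ p.2 ∧ OnPath T p.1 p.2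

lemma mem_treeFO (i j : Fin (n + 1)) :
    (i, j) ∈ treeFO T ↔ i ≠ 0 ∧ j ≠ 0 ∧ i ≠ j ∧ OnPath T i j := by
  simp [treeFO]

lemma onPath_of_zero (hT : T.IsTree) {j : Fin (n + 1)} (h : OnPath T 0 j) : j = 0 :=
  onPath_antisymm hT (onPath_zero j) h

lemma treeFO_mem (hT : T.IsTree) : treeFO T ∈ FO (Finset.univ.erase (0 : Fin (n + 1))) := by
  rw [mem_FO]
  refine ⟨?_, ?_, ?_, ?_⟩
  · intro x y h
    rw [mem_treeFO] at h
    simp [h.1, h.2.1]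
  · intro x h
    rw [mem_treeFO] at h
    exact h.2.2.1 rfl
  · intro x y z h h'
    rw [mem_treeFO] at h h' ⊢
    refine ⟨h.1, h'.2.1, ?_, onPath_trans hT h.2.2.2 h'.2.2.2⟩
    rintro rfl
    exact h.2.2.1 (onPath_antisymm hT h.2.2.2 h'.2.2.2)
  · intro x y z h h'
    simp only [mem_treeFO] at h h' ⊢
    by_cases hyz : y = z
    · exact Or.inl hyz
    · right
      rcases onPath_chain hT h.2.2.2 h'.2.2.2 with h3 | h3
      · exact Or.inl ⟨h.2.1, h'.2.1, hyz, h3⟩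
      · exact Or.inr ⟨h'.2.1, h.2.1, Ne.symm hyz, h3⟩

lemma onPath_iff_treeFO (hT : T.IsTree) (i j : Fin (n + 1)) :
    OnPath T i j ↔ i = j ∨ j = 0 ∨ (i, j) ∈ treeFO T := by
  rw [mem_treeFO]
  constructor
  · intro h
    by_cases h1 : i = j
    · exact Or.inl h1
    by_cases h2 : j = 0
    · exact Or.inr (Or.inl h2)
    refine Or.inr (Or.inr ⟨?_, h2, h1, h⟩)
    rintro rfl
    exact h2 (onPath_of_zero hT h)
  · rintro (rfl | rfl | h)
    · exact onPath_refl _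
    · exact onPath_zero _
    · exact h.2.2.2

lemma treeFO_inj {T T' : SimpleGraph (Fin (n + 1))} (hT : T.IsTree) (hT' : T'.IsTree)
    (h : treeFO T = treeFO T') : T = T' := by
  have hp : ∀ i j, OnPath T i j ↔ OnPath T' i j := by
    intro i j
    rw [onPath_iff_treeFO hT, onPath_iff_treeFO hT', h]
  ext i j
  rw [adj_iff_tcov hT, adj_iff_tcov hT']
  simp only [TCov, hp]

lemma treeInv_eq : treeInv T = invR (treeFO T) := by
  classical
  rw [treeInv, invR, Nat.card_eq_fintype_card, Fintype.card_subtype]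
  congr 1
  ext ⟨i, j⟩
  simp only [Finset.mem_filter, Finset.mem_univ, true_and, mem_treeFO]
  constructor
  · rintro ⟨h0, hij, hp⟩
    refine ⟨⟨?_, ?_, hij.ne, hp⟩, hij⟩
    · rintro rfl
      simp at h0
    · rintro rfl
      simp at hij
  · rintro ⟨⟨h0, -, -, hp⟩, hij⟩
    exact ⟨Fin.pos_iff_ne_zero.2 h0, hij, hp⟩

lemma treeFO_surj {R : Finset (Fin (n + 1) × Fin (n + 1))}
    (hR : R ∈ FO (Finset.univ.erase (0 : Fin (n + 1)))) :
    ∃ T : SimpleGraph (Fin (n + 1)), T.IsTree ∧ treeFO T = R := by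
  classical
  rw [mem_FO] at hR
  obtain ⟨hV, h1, h2, h3⟩ := hR
  simp only [Finset.mem_erase, Finset.mem_univ, and_true] at hV
  obtain ⟨E, hE⟩ : ∃ E : Fin (n + 1) → Fin (n + 1) → Prop,
      ∀ i j, E i j ↔ i ≠ 0 ∧ (j = 0 ∨ (i, j) ∈ R) := ⟨_, fun _ _ => Iff.rfl⟩
  have Eirr : ∀ i, ¬ E i i := by
    intro i h
    rw [hE] at h
    rcases h.2 with h4 | h4
    · exact h.1 h4
    · exact h1 i h4
  have Etrans : ∀ i j k, E i j → E j k → E i k := by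
    intro i j k h h'
    rw [hE] at h h' ⊢
    refine ⟨h.1, ?_⟩
    rcases h'.2 with h4 | h4
    · exact Or.inl h4
    · rcases h.2 with h5 | h5
      · exact absurd h5 h'.1
      · exact Or.inr (h2 _ _ _ h5 h4)
  have Echain : ∀ i j k, E i j → E i k → j = k ∨ E j k ∨ E k j := by
    intro i j k h h'
    simp only [hE] at h h' ⊢
    grind
  let d : Fin (n + 1) → ℕ := fun x => (Finset.univ.filter fun z => E x z).card
  have hd : ∀ x y, E x y → d y < d x := by
    intro x y hxy
    apply Finset.card_lt_card
    rw [Finset.ssubset_iff_of_subset]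
    · exact ⟨y, by simpa using hxy, by simpa using Eirr y⟩
    · intro z hz
      simp only [Finset.mem_filter, Finset.mem_univ, true_and] at hz ⊢
      exact Etrans _ _ _ hxy hz
  have hpar : ∀ i, ∃ m, i ≠ 0 → E i m ∧ ∀ k, E i k → k = m ∨ E m k := by
    intro i
    by_cases hi : i = 0
    · exact ⟨0, fun h => absurd hi h⟩
    · obtain ⟨m, hm, hmax⟩ := Finset.exists_max_image (Finset.univ.filter fun z => E i z) d
        ⟨0, by simp [hE, hi]⟩
      simp only [Finset.mem_filter, Finset.mem_univ, true_and] at hm hmax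
      refine ⟨m, fun _ => ⟨hm, fun k hk => ?_⟩⟩
      rcases Echain i m k hm hk with h | h | h
      · exact Or.inl h.symm
      · exact Or.inr h
      · exact absurd (hmax k hk) (not_le.2 (hd _ _ h))
  choose par hpar using hpar
  let G : SimpleGraph (Fin (n + 1)) := SimpleGraph.fromRel fun i j => i ≠ 0 ∧ par i = j
  have hadj : ∀ i, i ≠ 0 → G.Adj i (par i) := by
    intro i hi
    rw [SimpleGraph.fromRel_adj]
    refine ⟨?_, Or.inl ⟨hi, rfl⟩⟩
    intro h
    have := (hpar i hi).1
    rw [← h] at this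
    exact Eirr _ this
  have hwalk : ∀ (m : ℕ) (i : Fin (n + 1)), d i = m →
      ∃ p : G.Walk i 0, p.IsPath ∧ ∀ j, j ∈ p.support ↔ j = i ∨ E i j := by
    intro m
    induction m using Nat.strong_induction_on with
    | _ m ih =>
      intro i him
      by_cases hi : i = 0
      · subst hi
        refine ⟨SimpleGraph.Walk.nil, SimpleGraph.Walk.IsPath.nil, fun j => ?_⟩
        simp [hE]
      · obtain ⟨hp1, hp2⟩ := hpar i hi
        obtain ⟨p, hp, hsupp⟩ := ih (d (par i)) (him ▸ hd _ _ hp1) (par i) rfl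
        refine ⟨SimpleGraph.Walk.cons (hadj i hi) p, ?_, ?_⟩
        · rw [SimpleGraph.Walk.cons_isPath_iff]
          refine ⟨hp, ?_⟩
          rw [hsupp]
          rintro (h | h)
          · rw [← h] at hp1
            exact Eirr _ hp1
          · exact Eirr _ (Etrans _ _ _ hp1 h)
        · intro j
          rw [SimpleGraph.Walk.support_cons, List.mem_cons, hsupp]
          constructor
          · rintro (h | h | h)
            · exact Or.inl h
            · exact Or.inr (h ▸ hp1)
            · exact Or.inr (Etrans _ _ _ hp1 h)
          · rintro (h | h)
            · exact Or.inl h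
            · exact Or.inr (hp2 j h)
  have hconn : G.Connected := by
    rw [SimpleGraph.connected_iff_exists_forall_reachable]
    refine ⟨0, fun w => ?_⟩
    obtain ⟨p, -⟩ := hwalk _ w rfl
    exact p.reachable.symm
  have hcard : Nat.card G.edgeSet ≤ n := by
    have hsub : G.edgeSet ⊆ ↑((Finset.univ.erase (0 : Fin (n + 1))).image
        fun i => s(i, par i)) := by
      intro e
      induction e with
      | _ a b =>
        intro he
        rw [SimpleGraph.mem_edgeSet, SimpleGraph.fromRel_adj] at he
        simp only [Finset.coe_image, Set.mem_image, Finset.mem_coe, Finset.mem_erase,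
          Finset.mem_univ, and_true]
        rcases he.2 with ⟨ha, hb⟩ | ⟨ha, hb⟩
        · exact ⟨a, ha, by rw [hb]⟩
        · exact ⟨b, ha, by rw [hb, Sym2.eq_swap]⟩
    have e1 := Set.ncard_le_ncard hsub (Finset.finite_toSet _)
    rw [Set.ncard_coe_finset] at e1
    have e2 := Finset.card_image_le (s := Finset.univ.erase (0 : Fin (n + 1)))
      (f := fun i => s(i, par i))
    have e3 : (Finset.univ.erase (0 : Fin (n + 1))).card = n := by
      rw [Finset.card_erase_of_mem (Finset.mem_univ _)]
      simp
    rw [Nat.card_coe_set_eq]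
    omega
  have htree : G.IsTree := by
    rw [SimpleGraph.isTree_iff_connected_and_card]
    refine ⟨hconn, ?_⟩
    have := hconn.card_vert_le_card_edgeSet_add_one
    rw [Nat.card_eq_fintype_card (α := Fin (n + 1)), Fintype.card_fin] at this ⊢
    omega
  refine ⟨G, htree, ?_⟩
  ext ⟨i, j⟩
  obtain ⟨p, hp, hsupp⟩ := hwalk _ i rfl
  rw [mem_treeFO, onPath_iff htree hp, hsupp, hE]
  constructor
  · rintro ⟨hi, hj, hij, h | h⟩
    · exact absurd h.symm hij
    · exact h.2.resolve_left hj
  · intro h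
    obtain ⟨hi, hj⟩ := hV i j h
    refine ⟨hi, hj, ?_, Or.inr ⟨hi, Or.inr h⟩⟩
    rintro rfl
    exact h1 _ h

end Trees

lemma tree_side (n : ℕ) :
    (∑ᶠ T : {G : SimpleGraph (Fin (n+1)) // G.IsTree}, (X : Polynomial ℤ) ^ treeInv T.val)
      = krew n := by
  classical
  have h := sumFO_eq (Finset.univ.erase (0 : Fin (n + 1)))
  rw [Finset.card_erase_of_mem (Finset.mem_univ _), Finset.card_univ, Fintype.card_fin,
    Nat.add_sub_cancel] at h
  rw [← h, sumFO, finsum_eq_sum_of_fintype]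
  refine Finset.sum_bij (fun T _ => treeFO T.val) ?_ ?_ ?_ ?_
  · intro T _
    exact treeFO_mem T.2
  · intro T _ T' _ h
    exact Subtype.ext (treeFO_inj T.2 T'.2 h)
  · intro R hR
    obtain ⟨T, hT, rfl⟩ := treeFO_surj hR
    exact ⟨⟨T, hT⟩, Finset.mem_univ _, rfl⟩
  · intro T _
    rw [treeInv_eq]

end KrewerasProof

/-- The tree inversion enumerator equals the parking function cosum
enumerator, as polynomials in `q`. -/
theorem treeInvEnum_eq_pfCosumEnum (n : ℕ) :
    (∑ᶠ T : {G : SimpleGraph (Fin (n+1)) // G.IsTree}, (X : Polynomial ℤ) ^ treeInv T.val)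
      = ∑ᶠ π ∈ {π : Fin n → ℕ | IsPF n π}, (X : Polynomial ℤ) ^ cosum n π := by
  rw [tree_side, pf_side]
end

section
/- For n ≥ 1, the number of trees on {0,1,...,n} rooted at 0 with exactly one leaf, counted with weight q^{inv(T)}, equals [n]_q! = [1]_q [2]_q ⋯ [n]_q. Equivalently, I_n(q,0) = [n]_q!. -/
open Finset Polynomial

/-- The number of leaves of a tree on `{0,...,n}` rooted at `0`: the non-root
vertices with exactly one neighbor. -/
noncomputable def treeLev {n : ℕ} (T : SimpleGraph (Fin (n+1))) : ℕ :=
  Set.ncard {v : Fin (n+1) | v ≠ 0 ∧ (T.neighborSet v).ncard = 1}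

def permInv {m : ℕ} (σ : Equiv.Perm (Fin m)) : ℕ :=
  ∑ i, ∑ j, if i < j ∧ σ j < σ i then 1 else 0

def insPerm {m : ℕ} (x : Fin (m+1) × Equiv.Perm (Fin m)) : Equiv.Perm (Fin (m+1)) :=
  ((finSuccEquiv' 0).trans (Equiv.optionCongr x.2)).trans (finSuccEquiv' x.1).symm

lemma insPerm_zero {m : ℕ} (x : Fin (m+1) × Equiv.Perm (Fin m)) : insPerm x 0 = x.1 := by
  simp [insPerm]

lemma insPerm_succ {m : ℕ} (x : Fin (m+1) × Equiv.Perm (Fin m)) (i : Fin m) :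
    insPerm x i.succ = x.1.succAbove (x.2 i) := by
  have : finSuccEquiv' (0 : Fin (m+1)) i.succ = some i := by
    rw [← Fin.succAbove_zero, finSuccEquiv'_succAbove]
  simp [insPerm, this]

lemma insPerm_injective (m : ℕ) : Function.Injective (insPerm (m := m)) := by
  rintro ⟨p, σ⟩ ⟨p', σ'⟩ h
  have h0 := congrArg (fun e => e 0) h
  simp only [insPerm_zero] at h0
  subst h0
  congr 1
  ext i
  have h1 := congrArg (fun e => e i.succ) h
  simp only [insPerm_succ] at h1
  rw [Fin.succAbove_right_injective h1]

lemma insPerm_bijective (m : ℕ) : Function.Bijective (insPerm (m := m)) := by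
  rw [Fintype.bijective_iff_injective_and_card]
  refine ⟨insPerm_injective m, ?_⟩
  simp [Fintype.card_perm, Nat.factorial_succ]

lemma permInv_insPerm {m : ℕ} (x : Fin (m+1) × Equiv.Perm (Fin m)) :
    permInv (insPerm x) = x.1.val + permInv x.2 := by
  obtain ⟨p, σ⟩ := x
  unfold permInv
  rw [Fin.sum_univ_succ]
  congr 1
  · rw [Fin.sum_univ_succ]
    simp only [insPerm_zero, insPerm_succ, lt_irrefl, false_and, if_false, zero_add,
      Fin.succ_pos, true_and]
    rw [Equiv.sum_comp σ (fun k => if p.succAbove k < p then 1 else 0)]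
    simp only [Fin.succAbove_lt_iff_castSucc_lt]
    rw [← Finset.card_filter]
    have : (Finset.univ.filter (fun k : Fin m => k.castSucc < p)).card
        = (Finset.range p.val).card := by
      refine Finset.card_bij (fun k _ => k.val) ?_ ?_ ?_
      · intro k hk
        simpa [Fin.lt_def] using hk
      · intro a _ b _ h
        exact Fin.ext h
      · intro b hb
        have hb' := Finset.mem_range.1 hb
        exact ⟨⟨b, by omega⟩, by simpa [Fin.lt_def] using hb', rfl⟩
    simpa using this
  · refine Finset.sum_congr rfl fun i _ => ?_
    rw [Fin.sum_univ_succ]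
    simp [insPerm_succ, (Fin.strictMono_succAbove p).lt_iff_lt]

lemma sum_permInv (m : ℕ) : ∑ σ : Equiv.Perm (Fin m), (X : Polynomial ℤ) ^ permInv σ
    = ∏ k ∈ Finset.Icc 1 m, ∑ j ∈ Finset.range k, (X : Polynomial ℤ) ^ j := by
  induction m with
  | zero => simp [permInv]
  | succ m ih =>
    rw [Finset.prod_Icc_succ_top (by omega), ← ih,
      ← (insPerm_bijective m).sum_comp, Fintype.sum_prod_type]
    simp only [permInv_insPerm, pow_add]
    simp only [← Finset.mul_sum, ← Finset.sum_mul]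
    rw [Fin.sum_univ_eq_sum_range (fun j => (X : Polynomial ℤ) ^ j), mul_comm]

/-- path graph with depth function d -/
def pg {n : ℕ} (d : Equiv.Perm (Fin (n+1))) : SimpleGraph (Fin (n+1)) :=
  (SimpleGraph.pathGraph (n+1)).comap d

lemma pg_adj {n : ℕ} (d : Equiv.Perm (Fin (n+1))) (u v : Fin (n+1)) :
    (pg d).Adj u v ↔ (d u).val + 1 = (d v).val ∨ (d v).val + 1 = (d u).val := by
  simp [pg, SimpleGraph.pathGraph_adj]

lemma pg_walk_through {n : ℕ} (d : Equiv.Perm (Fin (n+1))) (j : Fin (n+1)) {u v : Fin (n+1)}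
    (p : (pg d).Walk u v) (h1 : d j ≤ d u) (h2 : d v ≤ d j) : j ∈ p.support := by
  induction p with
  | nil => simpa using d.injective (le_antisymm h1 h2)
  | @cons u v w h p ih =>
    rw [SimpleGraph.Walk.support_cons, List.mem_cons]
    by_cases hj : d j = d u
    · exact Or.inl (d.injective hj)
    · right
      refine ih ?_ h2
      have hj' : (d j).val ≠ (d u).val := fun h => hj (Fin.ext h)
      rw [pg_adj] at h
      rw [Fin.le_def] at h1 ⊢
      omega

lemma pg_exists_walk {n : ℕ} (d : Equiv.Perm (Fin (n+1))) (h0 : d 0 = 0) (k : ℕ) :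
    ∀ i : Fin (n+1), (d i).val = k → ∃ p : (pg d).Walk i 0, ∀ j ∈ p.support, d j ≤ d i := by
  induction k with
  | zero =>
    intro i hi
    have : i = 0 := d.injective (by rw [h0]; exact Fin.ext hi)
    subst this
    exact ⟨.nil, by simp⟩
  | succ k ih =>
    intro i hi
    have hk : k < n + 1 := by omega
    obtain ⟨p, hp⟩ := ih (d.symm ⟨k, hk⟩) (by simp)
    have ha : (pg d).Adj i (d.symm ⟨k, hk⟩) := by
      rw [pg_adj]; right; simp [hi]
    refine ⟨.cons ha p, ?_⟩
    intro j hj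
    rw [SimpleGraph.Walk.support_cons, List.mem_cons] at hj
    rcases hj with rfl | hj
    · exact le_rfl
    · have := hp j hj
      simp only [Equiv.apply_symm_apply, Fin.le_def] at this ⊢
      omega

lemma pg_onPath {n : ℕ} (d : Equiv.Perm (Fin (n+1))) (h0 : d 0 = 0) (i j : Fin (n+1)) :
    OnPath (pg d) i j ↔ d j ≤ d i := by
  classical
  constructor
  · intro h
    obtain ⟨p, hp⟩ := pg_exists_walk d h0 _ i rfl
    exact hp j (p.support_bypass_subset_support (h p.bypass p.bypass_isPath))
  · intro h p _
    exact pg_walk_through d j p h (by rw [h0]; exact Fin.zero_le _)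

lemma pg_treeInv {n : ℕ} (d : Equiv.Perm (Fin (n+1))) (h0 : d 0 = 0) :
    treeInv (pg d) = permInv d := by
  classical
  unfold treeInv permInv
  rw [Nat.card_eq_fintype_card, Fintype.card_subtype, Finset.card_filter, Fintype.sum_prod_type]
  refine Finset.sum_congr rfl fun i _ => Finset.sum_congr rfl fun j _ => ?_
  congr 1
  rw [pg_onPath d h0]
  apply propext
  constructor
  · rintro ⟨_, h2, h3⟩
    exact ⟨h2, lt_of_le_of_ne h3 fun h => h2.ne' (d.injective h)⟩
  · rintro ⟨h2, h3⟩
    refine ⟨?_, h2, h3.le⟩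
    rcases Nat.eq_zero_or_pos i.val with h | h
    · have : i = 0 := Fin.ext h
      subst this
      rw [h0] at h3
      exact absurd h3 (Fin.not_lt_zero _)
    · exact h

lemma pg_injective {n : ℕ} (d e : Equiv.Perm (Fin (n+1))) (hd : d 0 = 0) (he : e 0 = 0)
    (h : pg d = pg e) : d = e := by
  have key : ∀ i j, d j ≤ d i ↔ e j ≤ e i := fun i j => by
    rw [← pg_onPath d hd, ← pg_onPath e he, h]
  let f : Fin (n+1) ≃o Fin (n+1) :=
    { toEquiv := d.symm.trans e
      map_rel_iff' := by
        intro a b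
        simp [← key] }
  have hf : f = OrderIso.refl _ := Subsingleton.elim _ _
  ext i
  have := congrArg (fun g => g (d i)) hf
  simp [f] at this
  rw [this]

lemma pg_isTree {n : ℕ} (d : Equiv.Perm (Fin (n+1))) : (pg d).IsTree := by
  have hc : (pg d).Connected :=
    (SimpleGraph.Iso.comap d (SimpleGraph.pathGraph (n+1))).connected_iff.2
      (SimpleGraph.pathGraph_connected n)
  rw [SimpleGraph.isTree_iff_connected_and_card]
  refine ⟨hc, le_antisymm ?_ hc.card_vert_le_card_edgeSet_add_one⟩
  have hs : Function.Surjective (fun k : Fin n =>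
      (⟨s(d.symm k.castSucc, d.symm k.succ), by
        rw [SimpleGraph.mem_edgeSet, pg_adj]; simp⟩ : (pg d).edgeSet)) := by
    rintro ⟨e, he⟩
    induction e with
    | _ u v =>
      rw [SimpleGraph.mem_edgeSet, pg_adj] at he
      rcases he with he | he
      · refine ⟨⟨(d u).val, by omega⟩, Subtype.ext ?_⟩
        have h1 : (⟨(d u).val, by omega⟩ : Fin n).castSucc = d u := rfl
        have h2 : (⟨(d u).val, by omega⟩ : Fin n).succ = d v := Fin.ext he
        simp only [h1, h2, Equiv.symm_apply_apply]
      · refine ⟨⟨(d v).val, by omega⟩, Subtype.ext ?_⟩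
        have h1 : (⟨(d v).val, by omega⟩ : Fin n).castSucc = d v := rfl
        have h2 : (⟨(d v).val, by omega⟩ : Fin n).succ = d u := Fin.ext he
        simp only [h1, h2, Equiv.symm_apply_apply]
        exact Sym2.eq_swap
  have : Nat.card (pg d).edgeSet ≤ Nat.card (Fin n) := Nat.card_le_card_of_surjective _ hs
  simp only [Nat.card_eq_fintype_card, Fintype.card_fin] at this ⊢
  omega

lemma pg_treeLev {n : ℕ} (hn : 1 ≤ n) (d : Equiv.Perm (Fin (n+1))) (h0 : d 0 = 0) :
    treeLev (pg d) = 1 := by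
  unfold treeLev
  rw [Set.ncard_eq_one]
  refine ⟨d.symm (Fin.last n), ?_⟩
  ext v
  simp only [Set.mem_ofPred_eq, Set.mem_singleton_iff, Set.ncard_eq_one]
  constructor
  · rintro ⟨hv, w, hw⟩
    rw [Equiv.eq_symm_apply]
    have hv0 : (d v).val ≠ 0 := fun h => hv (d.injective (by rw [h0]; exact Fin.ext h))
    by_contra hl
    have hl' : (d v).val ≠ n := fun h => hl (Fin.ext h)
    have hlt := (d v).isLt
    have m1 : d.symm ⟨(d v).val - 1, by omega⟩ ∈ (pg d).neighborSet v := by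
      rw [SimpleGraph.mem_neighborSet, pg_adj]; simp; omega
    have m2 : d.symm ⟨(d v).val + 1, by omega⟩ ∈ (pg d).neighborSet v := by
      rw [SimpleGraph.mem_neighborSet, pg_adj]; simp
    rw [hw, Set.mem_singleton_iff] at m1 m2
    have := d.symm.injective (m1.trans m2.symm)
    rw [Fin.mk.injEq] at this
    omega
  · rintro rfl
    refine ⟨?_, d.symm ⟨n - 1, by omega⟩, ?_⟩
    · intro h
      rw [Equiv.symm_apply_eq, h0] at h
      have := congrArg Fin.val h
      simp at this
      omega
    · ext w
      rw [SimpleGraph.mem_neighborSet, pg_adj, Set.mem_singleton_iff, Equiv.eq_symm_apply,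
        Fin.ext_iff]
      simp
      omega

lemma tree_degrees {n : ℕ} (hn : 1 ≤ n) (T : SimpleGraph (Fin (n+1))) [DecidableRel T.Adj]
    (hT : T.IsTree)
    (hl : treeLev T = 1) : T.degree 0 ≤ 1 ∧ ∀ v, T.degree v ≤ 2 := by
  classical
  have : Nontrivial (Fin (n+1)) := Fin.nontrivial_iff_two_le.2 (by omega)
  have hpos : ∀ v, 1 ≤ T.degree v := fun v => hT.1.preconnected.degree_pos_of_nontrivial v
  obtain ⟨l, hl⟩ := Set.ncard_eq_one.1 hl
  have hdeg : ∀ v, (T.neighborSet v).ncard = T.degree v := fun v => by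
    rw [Set.ncard_eq_toFinset_card', ← SimpleGraph.card_neighborFinset_eq_degree]; rfl
  have hmem : ∀ v, (v ≠ 0 ∧ T.degree v = 1) ↔ v = l := fun v => by
    rw [← hdeg, ← Set.mem_singleton_iff (a := v) (b := l), ← hl]; rfl
  have hl0 : l ≠ 0 := ((hmem l).2 rfl).1
  let f : Fin (n+1) → ℕ := fun v => if v = 0 ∨ v = l then 1 else 2
  have hle : ∀ v ∈ (Finset.univ : Finset (Fin (n+1))), f v ≤ T.degree v := by
    intro v _
    have h1 := hpos v
    have h2 := hmem v
    simp only [f]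
    split_ifs with h
    · exact h1
    · have : T.degree v ≠ 1 := fun hh => h (Or.inr (h2.1 ⟨fun h' => h (Or.inl h'), hh⟩))
      omega
  have hsum : ∑ v, f v + 2 = 2 * (n + 1) := by
    have e1 : ∀ v, f v + ((if v = 0 then 1 else 0) + (if v = l then 1 else 0)) = 2 := by
      intro v
      simp only [f]
      by_cases h : v = 0
      · subst h; simp [hl0.symm]
      · by_cases h' : v = l <;> simp [h, h']
        subst h'; simp [h]
    have e2 := Finset.sum_congr (rfl : (Finset.univ : Finset (Fin (n+1))) = _) (fun v _ => e1 v)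
    rw [Finset.sum_add_distrib, Finset.sum_add_distrib] at e2
    simp at e2
    omega
  have htot := T.sum_degrees_eq_twice_card_edges
  have hE := hT.card_edgeFinset
  rw [Fintype.card_fin] at hE
  have heq : ∑ v, f v = ∑ v, T.degree v := by omega
  have hall := (Finset.sum_eq_sum_iff_of_le hle).1 heq
  constructor
  · rw [← hall 0 (Finset.mem_univ _)]; simp [f]
  · intro v
    rw [← hall v (Finset.mem_univ _)]
    simp only [f]; split_ifs <;> omega

lemma exists_parent {n : ℕ} {T : SimpleGraph (Fin (n+1))} (hT : T.Connected) {v : Fin (n+1)}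
    {k : ℕ} (hv : T.dist v 0 = k + 1) : ∃ w, T.Adj v w ∧ T.dist w 0 = k := by
  obtain ⟨p, hp⟩ := hT.exists_walk_length_eq_dist v 0
  cases p with
  | nil => simp at hv
  | @cons _ w _ h p =>
    refine ⟨w, h, ?_⟩
    rw [SimpleGraph.Walk.length_cons] at hp
    have h1 := SimpleGraph.dist_le p
    have h2 := hT.dist_triangle (u := v) (v := w) (w := 0)
    have h3 : T.dist v w = 1 := SimpleGraph.dist_eq_one_iff_adj.2 h
    omega

lemma tree_dist_inj {n : ℕ} (hn : 1 ≤ n) (T : SimpleGraph (Fin (n+1))) (hT : T.IsTree)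
    (hl : treeLev T = 1) (k : ℕ) : ∀ u v, T.dist u 0 = k → T.dist v 0 = k → u = v := by
  classical
  obtain ⟨hd0, hd⟩ := tree_degrees hn T hT hl
  induction k with
  | zero =>
    intro u v hu hv
    rw [(hT.1.dist_eq_zero_iff).1 hu, (hT.1.dist_eq_zero_iff).1 hv]
  | succ k ih =>
    intro u v hu hv
    by_contra hne
    obtain ⟨w, hw, hwk⟩ := exists_parent hT.1 hu
    obtain ⟨w', hw', hwk'⟩ := exists_parent hT.1 hv
    obtain rfl := ih w w' hwk hwk'
    cases k with
    | zero =>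
      obtain rfl := (hT.1.dist_eq_zero_iff).1 hwk
      have : ({u, v} : Finset (Fin (n+1))) ⊆ T.neighborFinset 0 := by
        intro x hx
        simp at hx
        rcases hx with rfl | rfl <;> simp [SimpleGraph.adj_comm, *]
      have := Finset.card_le_card this
      rw [Finset.card_pair hne, SimpleGraph.card_neighborFinset_eq_degree] at this
      omega
    | succ k =>
      obtain ⟨z, hz, hzk⟩ := exists_parent hT.1 hwk
      have hs : ({u, v, z} : Finset (Fin (n+1))) ⊆ T.neighborFinset w := by
        intro x hx
        simp at hx
        rw [SimpleGraph.mem_neighborFinset]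
        rcases hx with rfl | rfl | rfl
        · exact hw.symm
        · exact hw'.symm
        · exact hz
      have := Finset.card_le_card hs
      have h1 : u ≠ z := by rintro rfl; omega
      have h2 : v ≠ z := by rintro rfl; omega
      rw [Finset.card_eq_three.2 ⟨u, v, z, hne, h1, h2, rfl⟩,
        SimpleGraph.card_neighborFinset_eq_degree] at this
      have := hd w
      omega

lemma tree_eq_pg {n : ℕ} (hn : 1 ≤ n) (T : SimpleGraph (Fin (n+1))) (hT : T.IsTree)
    (hl : treeLev T = 1) : ∃ d : Equiv.Perm (Fin (n+1)), d 0 = 0 ∧ pg d = T := by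
  classical
  have hinj := tree_dist_inj hn T hT hl
  have hlt : ∀ v, T.dist v 0 < n + 1 := by
    intro v
    obtain ⟨p, hp, hpl⟩ := hT.1.exists_path_of_dist v 0
    have := hp.length_lt
    rw [Fintype.card_fin] at this
    omega
  let f : Fin (n+1) → Fin (n+1) := fun v => ⟨T.dist v 0, hlt v⟩
  have hf : Function.Injective f := by
    intro u v h
    exact hinj _ u v rfl (Fin.mk.inj h).symm
  refine ⟨Equiv.ofBijective f (Finite.injective_iff_bijective.1 hf), ?_, ?_⟩
  · apply Fin.ext; simp [f]
  · ext u v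
    rw [pg_adj]
    simp only [Equiv.ofBijective_apply, f]
    constructor
    · rintro (h | h)
      · obtain ⟨w, hw, hwk⟩ := exists_parent hT.1 h.symm
        obtain rfl := hinj _ w u hwk rfl
        exact hw.symm
      · obtain ⟨w, hw, hwk⟩ := exists_parent hT.1 h.symm
        obtain rfl := hinj _ w v hwk rfl
        exact hw
    · intro h
      have h1 := hT.1.dist_triangle (u := v) (v := u) (w := 0)
      have h2 := hT.1.dist_triangle (u := u) (v := v) (w := 0)
      have h3 : T.dist u v = 1 := SimpleGraph.dist_eq_one_iff_adj.2 h
      have h4 : T.dist v u = 1 := SimpleGraph.dist_eq_one_iff_adj.2 h.symm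
      have h5 : T.dist u 0 ≠ T.dist v 0 := fun hh => h.ne (hinj _ u v hh rfl)
      omega

/-- `I_n(q,0) = [n]_q!`: for `n ≥ 1`, the `q^{inv}`-weighted count of trees on
`{0,...,n}` rooted at `0` with exactly one leaf equals `[1]_q [2]_q ⋯ [n]_q`. -/
theorem treeInvEnum_one_leaf (n : ℕ) (hn : 1 ≤ n) :
    (∑ᶠ T ∈ {G : SimpleGraph (Fin (n+1)) | G.IsTree ∧ treeLev G = 1},
        (X : Polynomial ℤ) ^ treeInv T)
      = ∏ k ∈ Finset.Icc 1 n, ∑ j ∈ Finset.range k, (X : Polynomial ℤ) ^ j := by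
  have hset : {G : SimpleGraph (Fin (n+1)) | G.IsTree ∧ treeLev G = 1}
      = Set.range (fun σ : Equiv.Perm (Fin n) => pg (insPerm (0, σ))) := by
    ext T
    simp only [Set.mem_ofPred_eq, Set.mem_range]
    constructor
    · rintro ⟨hT, hl⟩
      obtain ⟨d, hd, rfl⟩ := tree_eq_pg hn T hT hl
      obtain ⟨⟨p, σ⟩, rfl⟩ := (insPerm_bijective n).2 d
      rw [insPerm_zero] at hd
      simp only at hd
      subst hd
      exact ⟨σ, rfl⟩
    · rintro ⟨σ, rfl⟩
      exact ⟨pg_isTree _, pg_treeLev hn _ (insPerm_zero _)⟩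
  have hinj : Function.Injective (fun σ : Equiv.Perm (Fin n) => pg (insPerm (0, σ))) := by
    intro σ τ h
    have := insPerm_injective n (pg_injective _ _ (insPerm_zero _) (insPerm_zero _) h)
    exact (Prod.mk.inj this).2
  rw [hset, finsum_mem_range hinj, finsum_eq_sum_of_fintype, ← sum_permInv]
  refine Finset.sum_congr rfl fun σ _ => ?_
  rw [pg_treeInv _ (insPerm_zero _), permInv_insPerm]
  simp
end

section
/- For n ≥ 1, the generating function of increasing trees on {0,1,...,n} (trees with no inversions) by number of leaves satisfies Σ_{T increasing} t^{lev(T)−1} = A_n(t), the n-th Eulerian polynomial. Equivalently, I_n(0,t) = A_n(t). -/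
open Finset Polynomial

/-- The number of descents of a permutation `σ ∈ S_n`: indices `i` with
`σ i > σ (i+1)` (0-indexed consecutive pairs). -/
def desNum {n : ℕ} (σ : Equiv.Perm (Fin n)) : ℕ :=
  ((Finset.univ : Finset (Fin n × Fin n)).filter
    fun p => p.1.val + 1 = p.2.val ∧ σ p.2 < σ p.1).card

noncomputable def eulOp (n : ℕ) (p : Polynomial ℤ) : Polynomial ℤ :=
  (1 + (n : Polynomial ℤ) * X) * p + (X - X ^ 2) * derivative p

theorem eulOp_sum {ι : Type*} (s : Finset ι) (n : ℕ) (g : ι → Polynomial ℤ) :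
    eulOp n (∑ i ∈ s, g i) = ∑ i ∈ s, eulOp n (g i) := by
  simp only [eulOp, derivative_sum, Finset.mul_sum, Finset.sum_add_distrib]

theorem sum_eq_eulOp (n d : ℕ) (G : Finset (Fin (n+1))) (hG : G.card = d + 1)
    (g : Fin (n+1) → ℕ) (h1 : ∀ p ∈ G, g p = d) (h2 : ∀ p ∉ G, g p = d + 1) :
    ∑ p, (X : Polynomial ℤ) ^ g p = eulOp n (X ^ d) := by
  have hle : d + 1 ≤ n + 1 := by
    rw [← hG]; simpa using Finset.card_le_univ G
  rw [← Finset.sum_add_sum_compl G]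
  rw [Finset.sum_congr rfl (fun p hp => by rw [h1 p hp]),
    Finset.sum_congr (s₁ := Gᶜ) rfl (fun p hp => by rw [h2 p (Finset.mem_compl.1 hp)])]
  rw [Finset.sum_const, Finset.sum_const, Finset.card_compl, hG, Fintype.card_fin]
  obtain ⟨k, rfl⟩ : ∃ k, n = d + k := ⟨n - d, by omega⟩
  rw [show d + k + 1 - (d + 1) = k by omega]
  rw [eulOp, derivative_X_pow]
  rcases d with _ | d
  · simp
  · simp only [nsmul_eq_mul, map_natCast, Nat.add_sub_cancel]
    push_cast
    ring

/-- descent set -/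
def desSet {n : ℕ} (σ : Equiv.Perm (Fin n)) : Finset (Fin n) :=
  Finset.univ.filter fun i => ∃ j : Fin n, i.val + 1 = j.val ∧ σ j < σ i

theorem desNum_eq {n : ℕ} (σ : Equiv.Perm (Fin n)) : desNum σ = (desSet σ).card := by
  unfold desNum
  refine Finset.card_bij (fun p _ => p.1) ?_ ?_ ?_
  · rintro ⟨a, b⟩ h
    simp only [Finset.mem_filter, Finset.mem_univ, true_and] at h
    simp only [desSet, Finset.mem_filter, Finset.mem_univ, true_and]
    exact ⟨b, h⟩
  · rintro ⟨a, b⟩ h ⟨c, d⟩ h' e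
    simp only [Finset.mem_filter, Finset.mem_univ, true_and] at h h'
    simp only at e
    subst e
    have : b = d := Fin.ext (by omega)
    rw [this]
  · intro i hi
    simp only [desSet, Finset.mem_filter, Finset.mem_univ, true_and] at hi
    obtain ⟨j, hj⟩ := hi
    exact ⟨(i, j), by simpa using hj, rfl⟩

/-- insert the maximum at position `p` -/
def insMax {n : ℕ} (x : Fin (n+1) × Equiv.Perm (Fin n)) : Equiv.Perm (Fin (n+1)) :=
  ((finSuccEquiv' x.1).trans (Equiv.optionCongr x.2)).trans (finSuccEquiv' (Fin.last n)).symm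

theorem insMax_self {n : ℕ} (p : Fin (n+1)) (σ : Equiv.Perm (Fin n)) :
    insMax (p, σ) p = Fin.last n := by
  simp [insMax]

theorem insMax_succAbove {n : ℕ} (p : Fin (n+1)) (σ : Equiv.Perm (Fin n)) (i : Fin n) :
    insMax (p, σ) (p.succAbove i) = (σ i).castSucc := by
  simp [insMax]

theorem insMax_bij (n : ℕ) : Function.Bijective (insMax (n := n)) := by
  rw [Fintype.bijective_iff_injective_and_card]
  constructor
  · rintro ⟨p, σ⟩ ⟨q, τ⟩ h
    have hp : p = q := by
      apply (insMax (q, τ)).injective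
      rw [insMax_self, ← h, insMax_self]
    subst hp
    congr 1
    ext i : 1
    have := congrArg (fun e => e (p.succAbove i)) h
    simp only [insMax_succAbove] at this
    exact Fin.castSucc_injective _ this
  · simp [Fintype.card_perm, Nat.factorial_succ]

theorem desSet_ins_self {n : ℕ} (p : Fin (n+1)) (σ : Equiv.Perm (Fin n)) :
    p ∈ desSet (insMax (p, σ)) ↔ p ≠ Fin.last n := by
  simp only [desSet, Finset.mem_filter, Finset.mem_univ, true_and, insMax_self]
  constructor
  · rintro ⟨j, h, -⟩ rfl
    have := j.isLt
    simp at h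
    omega
  · intro h
    have hp : p.val < n := Fin.val_lt_last h
    refine ⟨⟨p.val + 1, by omega⟩, rfl, ?_⟩
    rw [Fin.lt_last_iff_ne_last, ← insMax_self p σ]
    intro e
    have := congrArg Fin.val ((insMax (p, σ)).injective e)
    simp at this

theorem desSet_ins_succAbove {n : ℕ} (p : Fin (n+1)) (σ : Equiv.Perm (Fin n)) (i : Fin n) :
    p.succAbove i ∈ desSet (insMax (p, σ)) ↔ i ∈ desSet σ ∧ i.val + 1 ≠ p.val := by
  have hv : ∀ k : Fin n, (p.succAbove k).val = if k.val < p.val then k.val else k.val + 1 := by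
    intro k
    simp only [Fin.succAbove, Fin.lt_def, Fin.val_castSucc]
    split_ifs <;> simp
  simp only [desSet, Finset.mem_filter, Finset.mem_univ, true_and, insMax_succAbove]
  constructor
  · rintro ⟨j, h, hj⟩
    rcases Fin.eq_self_or_eq_succAbove p j with rfl | ⟨k, rfl⟩
    · rw [insMax_self] at hj
      exact absurd (Fin.le_last _) (not_le.2 hj)
    · rw [insMax_succAbove, Fin.castSucc_lt_castSucc_iff] at hj
      rw [hv, hv] at h
      have hik : i ≠ k := by rintro rfl; exact lt_irrefl _ hj
      have : i.val ≠ k.val := fun e => hik (Fin.ext e)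
      refine ⟨⟨k, ?_, hj⟩, ?_⟩ <;> split_ifs at h <;> omega
  · rintro ⟨⟨k, h, hk⟩, hp⟩
    refine ⟨p.succAbove k, ?_, ?_⟩
    · rw [hv, hv]; split_ifs <;> omega
    · rw [insMax_succAbove]; exact Fin.castSucc_lt_castSucc_iff.2 hk

theorem desSet_ins {n : ℕ} (p : Fin (n+1)) (σ : Equiv.Perm (Fin n)) :
    (desSet (insMax (p, σ))).card =
      ((desSet σ).filter (fun i => i.val + 1 ≠ p.val)).card + if p = Fin.last n then 0 else 1 := by
  have : desSet (insMax (p, σ)) =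
      (((desSet σ).filter (fun i => i.val + 1 ≠ p.val)).map p.succAboveEmb) ∪
        (if p = Fin.last n then ∅ else {p}) := by
    ext x
    rcases Fin.eq_self_or_eq_succAbove p x with rfl | ⟨k, rfl⟩
    · rw [desSet_ins_self]
      split_ifs with h <;> simp [h, Fin.succAbove_ne]
    · rw [desSet_ins_succAbove]
      split_ifs with h <;> simp [Fin.succAbove_ne]
  rw [this, Finset.card_union_of_disjoint, Finset.card_map]
  · split_ifs <;> simp
  · split_ifs <;> simp [Fin.succAbove_ne]

theorem perm_rec (n : ℕ) :
    ∑ σ : Equiv.Perm (Fin (n+1)), (X : Polynomial ℤ) ^ desNum σ =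
      eulOp n (∑ σ : Equiv.Perm (Fin n), (X : Polynomial ℤ) ^ desNum σ) := by
  rw [eulOp_sum, ← Fintype.sum_bijective _ (insMax_bij n) _ _ (fun _ => rfl),
    Fintype.sum_prod_type_right]
  refine Finset.sum_congr rfl fun σ _ => ?_
  have hlast : Fin.last n ∉ (desSet σ).map (Fin.succEmb n) := by
    simp only [Finset.mem_map, not_exists, not_and]
    intro i hi e
    simp only [desSet, Finset.mem_filter, Finset.mem_univ, true_and] at hi
    obtain ⟨j, hj, -⟩ := hi
    have := congrArg Fin.val e
    have := j.isLt
    simp at *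
    omega
  have key : ∀ p : Fin (n+1), p ∉ (desSet σ).map (Fin.succEmb n) →
      (desSet σ).filter (fun i => i.val + 1 ≠ p.val) = desSet σ := by
    intro p hp
    refine Finset.filter_true_of_mem fun i hi e => hp ?_
    exact Finset.mem_map.2 ⟨i, hi, Fin.ext (by simpa using e)⟩
  apply sum_eq_eulOp n _ (insert (Fin.last n) ((desSet σ).map (Fin.succEmb n)))
  · rw [Finset.card_insert_of_notMem hlast, Finset.card_map, desNum_eq]
  · intro p hp
    rw [desNum_eq, desNum_eq, desSet_ins]
    rcases Finset.mem_insert.1 hp with rfl | hp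
    · rw [key _ hlast]; simp
    · have hne : p ≠ Fin.last n := by rintro rfl; exact hlast hp
      obtain ⟨i, hi, rfl⟩ := Finset.mem_map.1 hp
      have : (desSet σ).filter (fun j => j.val + 1 ≠ ((Fin.succEmb n) i).val) = (desSet σ).erase i := by
        ext j
        simp [Fin.ext_iff, and_comm]
      rw [this, if_neg hne, Finset.card_erase_add_one hi]
  · intro p hp
    rw [Finset.mem_insert, not_or] at hp
    rw [desNum_eq, desNum_eq, desSet_ins, key _ hp.2, if_neg hp.1]

/-- parent functions -/
abbrev PF (n : ℕ) : Type := (i : Fin n) → Fin (i.val + 1)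

def pLeaves {n : ℕ} (f : PF n) : Finset (Fin n) :=
  Finset.univ.filter fun i => ∀ j, (f j).val ≠ i.val + 1

theorem pLeaves_snoc {n : ℕ} (p : Fin (n+1)) (f : PF n) :
    (pLeaves (n := n+1) (Fin.snoc (α := fun i : Fin (n+1) => Fin (i.val+1)) f p)).card =
      ((pLeaves f).filter (fun i => i.val + 1 ≠ p.val)).card + 1 := by
  have : pLeaves (n := n+1) (Fin.snoc (α := fun i : Fin (n+1) => Fin (i.val+1)) f p) =
      insert (Fin.last n) (((pLeaves f).filter (fun i => i.val + 1 ≠ p.val)).map Fin.castSuccEmb) := by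
    ext x
    simp only [pLeaves, Finset.mem_filter, Finset.mem_univ, true_and, Finset.mem_insert,
      Finset.mem_map]
    induction x using Fin.lastCases with
    | last =>
      simp only [Fin.val_last, true_or, iff_true]
      intro j
      have h1 := (Fin.snoc (α := fun i : Fin (n+1) => Fin (i.val+1)) f p j).isLt
      have h2 := j.isLt
      omega
    | cast i =>
      rw [Fin.forall_fin_succ']
      simp only [Fin.snoc_castSucc, Fin.snoc_last, Fin.val_castSucc]
      constructor
      · rintro ⟨h1, h2⟩
        exact Or.inr ⟨i, ⟨h1, fun h => h2 h.symm⟩, rfl⟩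
      · rintro (h | ⟨k, ⟨h1, h2⟩, hk⟩)
        · exact absurd h (Fin.castSucc_ne_last i)
        · obtain rfl : k = i := Fin.castSucc_injective _ hk
          exact ⟨h1, fun h => h2 h.symm⟩
  rw [this, Finset.card_insert_of_notMem, Finset.card_map]
  simp [Fin.castSucc_ne_last]

theorem pLeaves_pos {n : ℕ} (hn : 1 ≤ n) (f : PF n) : 1 ≤ (pLeaves f).card := by
  refine Finset.card_pos.2 ⟨⟨n - 1, by omega⟩, ?_⟩
  simp only [pLeaves, Finset.mem_filter, Finset.mem_univ, true_and]
  intro j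
  have h1 := (f j).isLt
  have h2 := j.isLt
  omega

theorem pf_rec (n : ℕ) (hn : 1 ≤ n) :
    ∑ f : PF (n+1), (X : Polynomial ℤ) ^ ((pLeaves f).card - 1) =
      eulOp n (∑ f : PF n, (X : Polynomial ℤ) ^ ((pLeaves f).card - 1)) := by
  rw [eulOp_sum, ← Fintype.sum_equiv (Fin.snocEquiv (fun i : Fin (n+1) => Fin (i.val+1)))
    (fun x => (X : Polynomial ℤ) ^ ((pLeaves (n := n+1) (Fin.snoc (α := fun i : Fin (n+1) => Fin (i.val+1)) x.2 x.1)).card - 1)) _ (fun _ => rfl),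
    Fintype.sum_prod_type_right]
  refine Finset.sum_congr rfl fun f _ => ?_
  have hpos := pLeaves_pos hn f
  apply sum_eq_eulOp n _ ((pLeaves f).map (Fin.succEmb n))
  · rw [Finset.card_map]; omega
  · intro p hp
    rw [pLeaves_snoc]
    obtain ⟨i, hi, rfl⟩ := Finset.mem_map.1 hp
    have : (pLeaves f).filter (fun j => j.val + 1 ≠ ((Fin.succEmb n) i).val) = (pLeaves f).erase i := by
      ext j
      simp [Fin.ext_iff, and_comm]
    rw [this, Finset.card_erase_add_one hi]
  · intro p hp
    rw [pLeaves_snoc]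
    have : (pLeaves f).filter (fun i => i.val + 1 ≠ p.val) = pLeaves f := by
      refine Finset.filter_true_of_mem fun i hi e => hp ?_
      exact Finset.mem_map.2 ⟨i, hi, Fin.ext (by simpa using e)⟩
    rw [this]; omega

theorem pf_eq_perm (n : ℕ) (hn : 1 ≤ n) :
    ∑ f : PF n, (X : Polynomial ℤ) ^ ((pLeaves f).card - 1) =
      ∑ σ : Equiv.Perm (Fin n), (X : Polynomial ℤ) ^ desNum σ := by
  induction n, hn using Nat.le_induction with
  | base =>
    have h1 : ∀ f : PF 1, (pLeaves f).card - 1 = 0 := by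
      intro f
      have := Finset.card_le_univ (pLeaves f)
      simp only [Fintype.card_fin] at this
      omega
    have h2 : ∀ σ : Equiv.Perm (Fin 1), desNum σ = 0 := by decide
    have h3 : Fintype.card (PF 1) = 1 := by decide
    simp only [h1, h2, pow_zero, Finset.sum_const, Finset.card_univ, h3, Fintype.card_perm]
    simp
  | succ n hn ih => rw [pf_rec n hn, perm_rec, ih]

def par {n : ℕ} (f : PF n) (i : Fin n) : Fin (n+1) := ⟨(f i).val, by have := (f i).isLt; omega⟩

theorem par_lt {n : ℕ} (f : PF n) (i : Fin n) : par f i < i.succ := by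
  have := (f i).isLt
  simp only [par, Fin.lt_def, Fin.val_succ]; omega

def pGraph {n : ℕ} (f : PF n) : SimpleGraph (Fin (n+1)) :=
  SimpleGraph.fromRel fun a b => ∃ i : Fin n, a = i.succ ∧ b = par f i

theorem pGraph_adj {n : ℕ} (f : PF n) (i : Fin n) : (pGraph f).Adj i.succ (par f i) := by
  rw [pGraph, SimpleGraph.fromRel_adj]
  exact ⟨(par_lt f i).ne', Or.inl ⟨i, rfl, rfl⟩⟩

theorem pGraph_adj_lt {n : ℕ} (f : PF n) (i : Fin n) (b : Fin (n+1)) (hb : b < i.succ)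
    (h : (pGraph f).Adj i.succ b) : b = par f i := by
  rw [pGraph, SimpleGraph.fromRel_adj] at h
  obtain ⟨-, ⟨j, h1, h2⟩ | ⟨j, h1, h2⟩⟩ := h
  · rw [Fin.succ_inj] at h1
    rw [h2, h1]
  · have := par_lt f j
    rw [← h1, ← h2] at this
    exact absurd hb this.not_gt

theorem pGraph_walk {n : ℕ} (f : PF n) : ∀ (m : ℕ) (a : Fin (n+1)), a.val = m →
    ∃ p : (pGraph f).Walk a 0, ∀ b ∈ p.support, b ≤ a := by
  intro m
  induction m using Nat.strong_induction_on with
  | _ m ih =>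
    intro a ha
    induction a using Fin.cases with
    | zero => exact ⟨SimpleGraph.Walk.nil, by simp⟩
    | succ i =>
      have hlt := par_lt f i
      obtain ⟨p, hp⟩ := ih (par f i).val (by rw [← ha]; exact hlt) _ rfl
      refine ⟨SimpleGraph.Walk.cons (pGraph_adj f i) p, ?_⟩
      intro b hb
      rw [SimpleGraph.Walk.support_cons, List.mem_cons] at hb
      rcases hb with rfl | hb
      · exact le_rfl
      · exact (hp b hb).trans hlt.le

theorem pGraph_connected {n : ℕ} (f : PF n) : (pGraph f).Connected := by
  rw [SimpleGraph.connected_iff]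
  refine ⟨fun a b => ?_, ⟨0⟩⟩
  obtain ⟨p, -⟩ := pGraph_walk f _ a rfl
  obtain ⟨q, -⟩ := pGraph_walk f _ b rfl
  exact ⟨p.append q.reverse⟩

theorem pGraph_isTree {n : ℕ} (f : PF n) : (pGraph f).IsTree := by
  rw [SimpleGraph.isTree_iff_connected_and_card]
  refine ⟨pGraph_connected f, ?_⟩
  have hinj : Function.Injective (fun i : Fin n => s(i.succ, par f i)) := by
    intro i j h
    simp only [Sym2.eq_iff] at h
    rcases h with ⟨h, -⟩ | ⟨h1, h2⟩
    · exact Fin.succ_injective _ h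
    · have a := par_lt f i
      have b := par_lt f j
      rw [h2] at a; rw [← h1] at b
      exact absurd a b.not_gt
  have : (pGraph f).edgeSet = Set.range (fun i : Fin n => s(i.succ, par f i)) := by
    ext e
    induction e using Sym2.ind with
    | _ a b =>
      rw [SimpleGraph.mem_edgeSet]
      constructor
      · intro h
        rw [pGraph, SimpleGraph.fromRel_adj] at h
        obtain ⟨-, ⟨j, rfl, rfl⟩ | ⟨j, rfl, rfl⟩⟩ := h
        · exact ⟨j, rfl⟩
        · exact ⟨j, Sym2.eq_swap⟩
      · rintro ⟨i, hi⟩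
        rw [← SimpleGraph.mem_edgeSet, ← hi, SimpleGraph.mem_edgeSet]
        exact pGraph_adj f i
  rw [this, Nat.card_congr (Equiv.ofInjective _ hinj).symm]
  simp

theorem treeInv_eq_zero {n : ℕ} (T : SimpleGraph (Fin (n+1))) :
    treeInv T = 0 ↔ ∀ i j : Fin (n+1), 0 < i.val → i < j → ¬ OnPath T i j := by
  rw [treeInv, Finite.card_eq_zero_iff, isEmpty_subtype]
  constructor
  · intro h i j h1 h2 h3
    exact h (i, j) ⟨h1, h2, h3⟩
  · rintro h ⟨i, j⟩ ⟨h1, h2, h3⟩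
    exact h i j h1 h2 h3

theorem pGraph_inv {n : ℕ} (f : PF n) : treeInv (pGraph f) = 0 := by
  rw [treeInv_eq_zero]
  intro i j _ hij h
  obtain ⟨p, hp⟩ := pGraph_walk f _ i rfl
  exact absurd hij (hp j (p.support_bypass_subset (h p.bypass p.bypass_isPath))).not_gt

theorem pGraph_injective (n : ℕ) : Function.Injective (pGraph (n := n)) := by
  intro f g h
  funext i
  have h1 := pGraph_adj f i
  rw [h] at h1
  have := pGraph_adj_lt g i _ (par_lt f i) h1
  have h2 : (par f i).val = (par g i).val := by rw [this]
  exact Fin.ext h2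

theorem pGraph_surj {n : ℕ} (T : SimpleGraph (Fin (n+1))) (hT : T.IsTree) (h0 : treeInv T = 0) :
    ∃ f : PF n, pGraph f = T := by
  rw [treeInv_eq_zero] at h0
  have key : ∀ i : Fin n, ∃ b : Fin (i.val + 1), T.Adj i.succ ⟨b.val, by omega⟩ := by
    intro i
    obtain ⟨p⟩ := hT.connected.preconnected i.succ 0
    have hq := p.bypass_isPath
    generalize p.bypass = q at hq
    have hon : ∀ j ∈ q.support, OnPath T i.succ j := by
      intro j hj r hr
      have := hT.isAcyclic.path_unique ⟨q, hq⟩ ⟨r, hr⟩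
      rw [Subtype.mk.injEq] at this
      rwa [← this]
    obtain ⟨b, hb, hbs⟩ : ∃ b, T.Adj i.succ b ∧ b ∈ q.support := by
      have hn : ¬ q.Nil := by
        intro hnil
        exact Fin.succ_ne_zero i hnil.eq
      exact ⟨q.snd, q.adj_snd hn, q.getVert_mem_support 1⟩
    have hle : ¬ i.succ < b := fun hlt => h0 i.succ b (by simp) hlt (hon b hbs)
    have hne := hb.ne
    have hlt : b < i.succ := lt_of_le_of_ne (not_lt.1 hle) hne.symm
    exact ⟨⟨b.val, hlt⟩, hb⟩
  choose f hf using key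
  refine ⟨f, ?_⟩
  have hle : pGraph f ≤ T := by
    intro a b h
    rw [pGraph, SimpleGraph.fromRel_adj] at h
    obtain ⟨-, ⟨j, rfl, rfl⟩ | ⟨j, rfl, rfl⟩⟩ := h
    · exact hf j
    · exact (hf j).symm
  exact le_antisymm hle
    ((SimpleGraph.isTree_iff_minimal_connected.1 hT).2 (pGraph_connected f) hle)

theorem treeLev_pGraph {n : ℕ} (f : PF n) : treeLev (pGraph f) = (pLeaves f).card := by
  have : {v : Fin (n+1) | v ≠ 0 ∧ ((pGraph f).neighborSet v).ncard = 1} =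
      ((pLeaves f).map (Fin.succEmb n) : Finset (Fin (n+1))) := by
    ext v
    induction v using Fin.cases with
    | zero => simp [Fin.succ_ne_zero]
    | succ i =>
      have e : i.succ ∈ (((pLeaves f).map (Fin.succEmb n) : Finset (Fin (n+1))) : Set (Fin (n+1)))
          ↔ ∀ j, (f j).val ≠ i.val + 1 := by
        simp [pLeaves]
      rw [e, Set.mem_setOf_eq]
      constructor
      · rintro ⟨-, h⟩ j hj
        have hp : par f j = i.succ := Fin.ext (by simpa [par] using hj)
        have h2 : (pGraph f).Adj i.succ j.succ := by rw [← hp]; exact (pGraph_adj f j).symm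
        obtain ⟨c, hc⟩ := Set.ncard_eq_one.1 h
        have m1 : par f i ∈ (pGraph f).neighborSet i.succ := pGraph_adj f i
        have m2 : j.succ ∈ (pGraph f).neighborSet i.succ := h2
        rw [hc, Set.mem_singleton_iff] at m1 m2
        have l1 := par_lt f i
        have l2 := par_lt f j
        rw [hp, m2, ← m1] at l2
        exact absurd l1 l2.not_gt
      · intro h
        refine ⟨Fin.succ_ne_zero i, Set.ncard_eq_one.2 ⟨par f i, ?_⟩⟩
        ext b
        rw [Set.mem_singleton_iff, SimpleGraph.mem_neighborSet]
        constructor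
        · intro hb
          have hb' := hb
          rw [pGraph, SimpleGraph.fromRel_adj] at hb'
          obtain ⟨-, ⟨j, h1, h2⟩ | ⟨j, h1, h2⟩⟩ := hb'
          · rw [Fin.succ_inj] at h1
            rw [h2, h1]
          · exact absurd (by simpa [par] using (congrArg Fin.val h2).symm) (h j)
        · rintro rfl
          exact pGraph_adj f i
  rw [treeLev, this, Set.ncard_coe_finset, Finset.card_map]

/-- `I_n(0,t) = A_n(t)`: for `n ≥ 1`, the generating function of increasing
trees on `{0,...,n}` (trees with no inversions) by number of leaves (minus one)
is the `n`-th Eulerian polynomial. -/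
theorem increasing_trees_eulerian (n : ℕ) (hn : 1 ≤ n) :
    (∑ᶠ T ∈ {G : SimpleGraph (Fin (n+1)) | G.IsTree ∧ treeInv G = 0},
        (X : Polynomial ℤ) ^ (treeLev T - 1))
      = ∑ σ : Equiv.Perm (Fin n), (X : Polynomial ℤ) ^ desNum σ := by
  have hset : {G : SimpleGraph (Fin (n+1)) | G.IsTree ∧ treeInv G = 0} =
      Set.range (pGraph (n := n)) := by
    ext T
    constructor
    · rintro ⟨h1, h2⟩
      exact pGraph_surj T h1 h2
    · rintro ⟨f, rfl⟩
      exact ⟨pGraph_isTree f, pGraph_inv f⟩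
  rw [hset, finsum_mem_range (pGraph_injective n), finsum_eq_sum_of_fintype, ← pf_eq_perm n hn]
  exact Finset.sum_congr rfl fun f _ => by rw [treeLev_pGraph]
end
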